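/- arXiv:1703.00766 — 2 statements merged into one kernel-verified Lean document; each statement's English description precedes it below -/
import Mathlib

section
/- Let R be a Noetherian ring, 𝔞 an ideal with dim R/𝔞 = 1, and M an R-module. If Ext^i_R(R/𝔞, M) is finitely generated for all i ≤ cd(𝔞, M) + 1, then the local cohomology module H^i_𝔞(M) is 𝔞-cofinite for every i ≥ 0. -/
open CategoryTheory

universe u

variable (R : Type u) [CommRing R]

/-- The `i`-th Ext module `Ext^i_R(N, M)` of `R`-modules. -/
noncomputable def extModule (i : ℕ) (N M : ModuleCat.{u} R) : ModuleCat.{u} R :=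
  ((Ext R (ModuleCat.{u} R) i).obj (Opposite.op N)).obj M

/-- A module is weakly Laskerian if every quotient has finitely many associated primes. -/
def IsWeaklyLaskerian (M : Type u) [AddCommGroup M] [Module R M] : Prop :=
  ∀ N : Submodule R M, (associatedPrimes R (M ⧸ N)).Finite

/-- `M` is `𝔞`-cofinite: `Supp M ⊆ V(𝔞)` and all `Ext^i_R(R/𝔞, M)` are finitely generated. -/
def IsCofinite (𝔞 : Ideal R) (M : ModuleCat.{u} R) : Prop :=
  Module.support R M ⊆ PrimeSpectrum.zeroLocus (𝔞 : Set R) ∧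
    ∀ i : ℕ, Module.Finite R (extModule R i (ModuleCat.of R (R ⧸ 𝔞)) M)

/-- `M` is `𝔞`-weakly cofinite: `Supp M ⊆ V(𝔞)` and all `Ext^i_R(R/𝔞, M)` are weakly
Laskerian. -/
def IsWeaklyCofinite (𝔞 : Ideal R) (M : ModuleCat.{u} R) : Prop :=
  Module.support R M ⊆ PrimeSpectrum.zeroLocus (𝔞 : Set R) ∧
    ∀ i : ℕ, IsWeaklyLaskerian R (extModule R i (ModuleCat.of R (R ⧸ 𝔞)) M)

/-- The Krull dimension of the support of a module. -/
noncomputable def suppDim (M : Type u) [AddCommGroup M] [Module R M] : WithBot ℕ∞ :=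
  Order.krullDim (Module.support R M)

/-- The cohomological dimension `cd(𝔞, M) = sup {i | H^i_𝔞(M) ≠ 0}`, as an element of `ℕ∞`. -/
noncomputable def cohomologicalDim (𝔞 : Ideal R) (M : ModuleCat.{u} R) : ℕ∞ :=
  ⨆ i ∈ {i : ℕ | Nontrivial ((localCohomology 𝔞 i).obj M)}, (i : ℕ∞)

/-- `p` is an attached prime of `M`: `p` is prime and is the annihilator of a quotient
of `M`. -/
def IsAttachedPrime (M : Type u) [AddCommGroup M] [Module R M] (p : Ideal R) : Prop :=
  p.IsPrime ∧ ∃ N : Submodule R M, p = Module.annihilator R (M ⧸ N)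

/-!
Write `Γ` for the `𝔞`-power torsion submodule and let `dim R ⧸ 𝔞 ≤ 1`. An `𝔞`-power torsion module
`N` is `𝔞`-cofinite as soon as `Hom(R ⧸ 𝔞, N)` and `Ext^1(R ⧸ 𝔞, N)` are finitely generated. To see
this, localise at the set `S` of elements outside every minimal prime of `𝔞`. Since
`S⁻¹(R ⧸ 𝔞)` is Artinian and the socle `0 :_N 𝔞` is finitely generated, `S⁻¹N` is Artinian, which
allows induction on the localisations of submodules of `N`. For `x ∈ 𝔞`, the induction applies to
the kernel and the image of multiplication by `x` when these are proper after localisation. If the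
image is not, the cokernel of `x` is `S`-torsion; if no kernel is, the quotient of `N` by its socle
is. An `S`-torsion module with finitely generated socle is Artinian, as its socle is killed by `𝔞`
and some `s ∈ S` and `R ⧸ (𝔞 + sR)` is Artinian; such modules are handled by the same induction
without localisation.

For a module `M` whose `Ext^i(R ⧸ 𝔞, M)` are finitely generated for `i ≤ n + 1`, the criterion
applies to `Γ M = H^0(M)`. Hence the `Ext^i(R ⧸ 𝔞, M ⧸ Γ M)` with `i ≤ n + 1` are finitely generated
too. Embed `M ⧸ Γ M` in an injective module `E` without `𝔞`-torsion. Since `E` has no local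
cohomology and no `Ext^i(R ⧸ 𝔞, E)`, the cokernel `Q` satisfies `H^n(M) ≃ H^(n-1)(Q)` for `n ≥ 1`
and inherits the finiteness of the `Ext^i(R ⧸ 𝔞, -)` up to degree `n`. One concludes by induction
on `n`.
-/

section

open Abelian Opposite
open Submodule (torsionBySet)

variable {R}

section ExtComparison

variable {X X' : ModuleCat.{u} R} (P : ProjectiveResolution X) (Y : ModuleCat.{u} R) (n : ℕ)

/-- The cochain complex `Hom(P, Y)` of a projective resolution `P`. -/
noncomputable abbrev homComplex : CochainComplex (ModuleCat R) ℕ :=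
  P.complex.linearYonedaObj R Y

/-- The morphism `P_n ⟶ Y` underlying an `n`-cocycle of `Hom(P, Y)`. -/
noncomputable def cocycleHom : (homComplex P Y).cycles n →ₗ[R] (P.complex.X n ⟶ Y) :=
  ((homComplex P Y).iCycles n).hom

lemma cocycleHom_injective : Function.Injective (cocycleHom P Y n) :=
  (ModuleCat.mono_iff_injective ((homComplex P Y).iCycles n)).1 inferInstance

lemma d_comp_cocycleHom (z : (homComplex P Y).cycles n) :
    P.complex.d (n + 1) n ≫ cocycleHom P Y n z = 0 :=
  congr($((homComplex P Y).iCycles_d n (n + 1)) z)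

lemma exists_cocycleHom_eq (f : P.complex.X n ⟶ Y) (hf : P.complex.d (n + 1) n ≫ f = 0) :
    ∃ z, cocycleHom P Y n z = f :=
  ⟨(homComplex P Y).cyclesMk (i := n) f (n + 1) (by simp) hf,
    (homComplex P Y).i_cyclesMk (i := n) f (n + 1) (by simp) hf⟩

lemma cocycleHom_toCycles (m : ℕ) (g : P.complex.X m ⟶ Y) :
    cocycleHom P Y n ((homComplex P Y).toCycles m n g) = P.complex.d n m ≫ g :=
  congr($((homComplex P Y).toCycles_i m n) g)

/-- The class in `Abelian.Ext X Y n` of an `n`-cocycle of `Hom(P, Y)`. -/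
noncomputable def cocycleClass : (homComplex P Y).cycles n →ₗ[R] Abelian.Ext X Y n where
  toFun z := P.extMk (cocycleHom P Y n z) (n + 1) rfl (d_comp_cocycleHom P Y n z)
  map_add' z w := by simp only [map_add, P.add_extMk]
  map_smul' r z := by
    rw [RingHom.id_apply, Abelian.Ext.smul_eq_comp_mk₀, P.extMk_comp_mk₀]
    simp only [map_smul, Linear.comp_smul, Category.comp_id]

lemma cocycleClass_surjective : Function.Surjective (cocycleClass P Y n) := by
  intro α
  obtain ⟨f, hf, rfl⟩ := P.extMk_surjective α (n + 1) rfl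
  obtain ⟨z, rfl⟩ := exists_cocycleHom_eq P Y n f hf
  exact ⟨z, rfl⟩

variable {P Y} in
lemma extMk_zero_eq_zero_iff (f : P.complex.X 0 ⟶ Y) (hf : P.complex.d 1 0 ≫ f = 0) :
    P.extMk f 1 rfl hf = 0 ↔ f = 0 := by
  refine ⟨fun h => ?_, by rintro rfl; exact P.extMk_zero 1 rfl⟩
  rw [← P.extEquivCohomologyClass.apply_eq_iff_eq, P.extEquivCohomologyClass_extMk,
    P.extEquivCohomologyClass_zero, CochainComplex.HomComplex.CohomologyClass.mk_eq_zero_iff,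
    CochainComplex.HomComplex.Cocycle.toSingleMk_mem_coboundaries_iff _ _ _ _ _ 1 (by simp)] at h
  obtain ⟨g, hg⟩ := h
  have hg₀ : g = 0 := (P.cochainComplex.isZero_of_isStrictlyLE 0 1 (by simp)).eq_of_src _ _
  rw [← cancel_epi (P.cochainComplexXIso (-((0 : ℕ) : ℤ)) 0 rfl).hom, ← hg, hg₀]
  simp

lemma cocycleClass_eq_zero_iff (z : (homComplex P Y).cycles n) :
    cocycleClass P Y n z = 0 ↔
      ∃ g, (homComplex P Y).toCycles ((ComplexShape.up ℕ).prev n) n g = z := by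
  suffices cocycleClass P Y n z = 0 ↔ ∃ g : P.complex.X ((ComplexShape.up ℕ).prev n) ⟶ Y,
      P.complex.d n _ ≫ g = cocycleHom P Y n z by
    simp_rw [this, ← cocycleHom_toCycles, (cocycleHom_injective P Y n).eq_iff]
    rfl
  cases n with
  | zero =>
    refine (extMk_zero_eq_zero_iff _ (d_comp_cocycleHom P Y 0 z)).trans ?_
    rw [P.complex.shape _ _ (by simp)]
    simp [eq_comm]
  | succ n =>
    rw [CochainComplex.prev_nat_succ n]
    exact P.extMk_eq_zero_iff _ _ rfl (d_comp_cocycleHom P Y _ z) n rfl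

lemma homologyπ_eq_zero_iff (z : (homComplex P Y).cycles n) :
    (homComplex P Y).homologyπ n z = 0 ↔
      ∃ g, (homComplex P Y).toCycles ((ComplexShape.up ℕ).prev n) n g = z := by
  have exact := ShortComplex.exact_of_g_is_cokernel
    (ShortComplex.mk _ _ ((homComplex P Y).toCycles_comp_homologyπ _ n))
    ((homComplex P Y).homologyIsCokernel _ n rfl)
  exact (ShortComplex.ShortExact.moduleCat_exact_iff_function_exact _).1 exact z

lemma ker_homologyπ_eq_ker_cocycleClass :
    LinearMap.ker ((homComplex P Y).homologyπ n).hom = LinearMap.ker (cocycleClass P Y n) :=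
  Submodule.ext fun z =>
    (homologyπ_eq_zero_iff P Y n z).trans (cocycleClass_eq_zero_iff P Y n z).symm

lemma homologyπ_surjective : Function.Surjective ((homComplex P Y).homologyπ n).hom :=
  (ModuleCat.epi_iff_surjective _).1 inferInstance

/-- The cohomology of `Hom(P, Y)` is `Abelian.Ext X Y`. -/
noncomputable def homologyEquivExt : (homComplex P Y).homology n ≃ₗ[R] Abelian.Ext X Y n :=
  (LinearMap.quotKerEquivOfSurjective _ (homologyπ_surjective P Y n)).symm ≪≫ₗ
    Submodule.quotEquivOfEq _ _ (ker_homologyπ_eq_ker_cocycleClass P Y n) ≪≫ₗ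
    LinearMap.quotKerEquivOfSurjective _ (cocycleClass_surjective P Y n)

lemma homologyEquivExt_homologyπ (z : (homComplex P Y).cycles n) :
    homologyEquivExt P Y n ((homComplex P Y).homologyπ n z) = cocycleClass P Y n z := by
  have : (LinearMap.quotKerEquivOfSurjective _ (homologyπ_surjective P Y n)).symm
      ((homComplex P Y).homologyπ n z) = Submodule.Quotient.mk z :=
    (LinearEquiv.symm_apply_eq _).2 rfl
  simp only [homologyEquivExt, LinearEquiv.trans_apply, this]
  rfl

section Naturality

variable {P} {g : X' ⟶ X} {P' : ProjectiveResolution X'} (φ : P'.Hom P g)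

/-- The map `Hom(P, Y) ⟶ Hom(P', Y)` induced by a morphism of projective resolutions. -/
noncomputable def homComplexMap : homComplex P Y ⟶ homComplex P' Y :=
  (HomologicalComplex.unopFunctor (ModuleCat.{u} R) (ComplexShape.down ℕ)).map
    ((((linearYoneda R (ModuleCat.{u} R)).obj Y).rightOp.mapHomologicalComplex _).map φ.hom).op

lemma cocycleHom_cyclesMap (z : (homComplex P Y).cycles n) :
    cocycleHom P' Y n (HomologicalComplex.cyclesMap (homComplexMap Y φ) n z) =
      φ.hom.f n ≫ cocycleHom P Y n z :=
  congr($(HomologicalComplex.cyclesMap_i (homComplexMap Y φ) n) z)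

lemma cocycleClass_cyclesMap (z : (homComplex P Y).cycles n) :
    cocycleClass P' Y n (HomologicalComplex.cyclesMap (homComplexMap Y φ) n z) =
      (Abelian.Ext.mk₀ g).comp (cocycleClass P Y n z) (zero_add n) := by
  refine Eq.trans ?_ (ProjectiveResolution.mk₀_comp_extMk _ _ rfl
    (d_comp_cocycleHom P Y n z) φ).symm
  simp only [cocycleClass, LinearMap.coe_mk, AddHom.coe_mk, cocycleHom_cyclesMap]

lemma homologyEquivExt_homologyMap (x : (homComplex P Y).homology n) :
    homologyEquivExt P' Y n (HomologicalComplex.homologyMap (homComplexMap Y φ) n x) =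
      (Abelian.Ext.mk₀ g).comp (homologyEquivExt P Y n x) (zero_add n) := by
  obtain ⟨z, rfl⟩ := homologyπ_surjective P Y n x
  calc homologyEquivExt P' Y n (HomologicalComplex.homologyMap (homComplexMap Y φ) n
        ((homComplex P Y).homologyπ n z))
      = homologyEquivExt P' Y n ((homComplex P' Y).homologyπ n
          (HomologicalComplex.cyclesMap (homComplexMap Y φ) n z)) :=
        congr(homologyEquivExt P' Y n
          ($(HomologicalComplex.homologyπ_naturality (homComplexMap Y φ) n) z))
    _ = (Abelian.Ext.mk₀ g).comp (cocycleClass P Y n z) (zero_add n) :=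
        (homologyEquivExt_homologyπ P' Y n _).trans (cocycleClass_cyclesMap Y n φ z)
    _ = (Abelian.Ext.mk₀ g).comp
          (homologyEquivExt P Y n ((homComplex P Y).homologyπ n z)) (zero_add n) := by
        rw [homologyEquivExt_homologyπ]

lemma isoExt_inv_naturality :
    (P.isoExt n Y).inv ≫ ((Ext R (ModuleCat.{u} R) n).map g.op).app Y =
      HomologicalComplex.homologyMap (homComplexMap Y φ) n ≫ (P'.isoExt n Y).inv := by
  have h₁ := congr($(ProjectiveResolution.isoLeftDerivedObj_hom_naturality g P' P φ.hom
    φ.hom_f_zero_comp_π_f_zero ((linearYoneda R (ModuleCat.{u} R)).obj Y).rightOp n).unop)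
  have h₂ := congr($(HomologicalComplex.homologyOp_hom_naturality (homComplexMap Y φ) n).unop)
  have h₃ := congr(((homComplex P Y).homologyOp n).hom.unop ≫ $h₁)
  have h₄ := congr($h₂ ≫
    (P'.isoLeftDerivedObj ((linearYoneda R (ModuleCat.{u} R)).obj Y).rightOp n).hom.unop)
  simp only [unop_comp] at h₃ h₄
  exact (Category.assoc _ _ _).trans (h₃.trans h₄)

end Naturality

/-- The isomorphism of `extModule`, the left derived functor of `Hom(-, Y)`, with `Abelian.Ext`,
which comes with long exact sequences. -/
noncomputable def extModuleEquiv (X Y : ModuleCat.{u} R) :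
    extModule R n X Y ≃ₗ[R] Abelian.Ext X Y n :=
  ((projectiveResolution X).isoExt n Y).toLinearEquiv ≪≫ₗ
    homologyEquivExt (projectiveResolution X) Y n

/-- The map `Ext^n(X, Y) → Ext^n(X', Y)` induced by `g : X' ⟶ X`. -/
noncomputable def extModuleMap (g : X' ⟶ X) : extModule R n X Y →ₗ[R] extModule R n X' Y :=
  (((Ext R (ModuleCat.{u} R) n).map g.op).app Y).hom

lemma extModuleEquiv_extModuleMap (g : X' ⟶ X) (x : extModule R n X Y) :
    extModuleEquiv n X' Y (extModuleMap Y n g x) =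
      (Abelian.Ext.mk₀ g).comp (extModuleEquiv n X Y x) (zero_add n) := by
  let P := projectiveResolution X
  let P' := projectiveResolution X'
  let φ : P'.Hom P g :=
    ⟨ProjectiveResolution.lift g P' P, congr($(ProjectiveResolution.lift_commutes g P' P).f 0)⟩
  have hx : (P'.isoExt n Y).hom (extModuleMap Y n g x) =
      HomologicalComplex.homologyMap (homComplexMap Y φ) n ((P.isoExt n Y).hom x) := by
    have := isoExt_inv_naturality Y n φ
    rw [Iso.inv_comp_eq, ← Category.assoc, Iso.eq_comp_inv] at this
    exact congr($this x)
  exact (congrArg (homologyEquivExt P' Y n) hx).trans (homologyEquivExt_homologyMap Y n φ _)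

end ExtComparison

/-! ### Local cohomology as a direct limit of Ext modules -/

section FilteredColimits

variable {J : Type} [SmallCategory J] [IsFiltered J] {F : J ⥤ ModuleCat.{u} R}
  {c : Limits.Cocone F} (hc : Limits.IsColimit c)

instance : Limits.PreservesFilteredColimitsOfSize.{0, 0} (forget (ModuleCat.{u} R)) :=
  Limits.preservesSmallestFilteredColimits_of_preservesFilteredColimits.{u, u} _

include hc

lemma exists_rep_of_isColimit (z : c.pt) : ∃ (j : J) (x : F.obj j), c.ι.app j x = z :=
  Limits.Concrete.isColimit_exists_rep F hc z

lemma exists_map_eq_zero_of_isColimit {j : J} {x : F.obj j} (hx : c.ι.app j x = 0) :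
    ∃ (k : J) (f : j ⟶ k), F.map f x = 0 := by
  obtain ⟨k, f, hf⟩ := (Limits.IsColimit.eq_iff' hc x 0).1 (hx.trans (map_zero _).symm)
  exact ⟨k, f, hf.trans (map_zero _)⟩

end FilteredColimits

section LocalCohomology

variable (𝔞 : Ideal R) (M N : ModuleCat.{u} R) (i : ℕ)

/-- The cyclic module `R ⧸ 𝔞 ^ t`. -/
abbrev quotPow (t : ℕ) : ModuleCat.{u} R := ModuleCat.of R (R ⧸ 𝔞 ^ t)

/-- The projection `R ⧸ 𝔞 ^ t ⟶ R ⧸ 𝔞 ^ s` for `s ≤ t`. -/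
def quotPowProj {s t : ℕ} (h : s ≤ t) : quotPow 𝔞 t ⟶ quotPow 𝔞 s :=
  ModuleCat.ofHom (Submodule.mapQ _ _ LinearMap.id (Ideal.pow_le_pow_right h))

/-- The transition map `Ext^i(R ⧸ 𝔞 ^ s, M) → Ext^i(R ⧸ 𝔞 ^ t, M)` for `s ≤ t`. -/
noncomputable def extTransition (s t : ℕ) (h : s ≤ t) :
    Abelian.Ext (quotPow 𝔞 s) M i →ₗ[R] Abelian.Ext (quotPow 𝔞 t) M i :=
  (Abelian.Ext.mk₀ (quotPowProj 𝔞 h)).precompOfLinear R M (zero_add i)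

variable {𝔞 M N i}

lemma extTransition_apply {s t : ℕ} (h : s ≤ t) (α : Abelian.Ext (quotPow 𝔞 s) M i) :
    extTransition 𝔞 M i s t h α =
      (Abelian.Ext.mk₀ (quotPowProj 𝔞 h)).comp α (zero_add i) := rfl

lemma extTransition_comp {s t : ℕ} (h : s ≤ t) {j k : ℕ} (α : Abelian.Ext (quotPow 𝔞 s) M i)
    (β : Abelian.Ext M N j) (hk : i + j = k) :
    extTransition 𝔞 N k s t h (α.comp β hk) = (extTransition 𝔞 M i s t h α).comp β hk := by
  simp only [extTransition_apply]
  rw [Abelian.Ext.comp_assoc]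
  lia

lemma extTransition_extModuleEquiv {s t : ℕ} (h : s ≤ t) (x : extModule R i (quotPow 𝔞 s) M) :
    extTransition 𝔞 M i s t h (extModuleEquiv i _ M x) =
      extModuleEquiv i _ M (extModuleMap M i (quotPowProj 𝔞 h) x) :=
  (extModuleEquiv_extModuleMap M i (quotPowProj 𝔞 h) x).symm

variable (𝔞 M i)

instance : DirectedSystem (fun t => Abelian.Ext (quotPow 𝔞 t) M i)
    fun s t h => extTransition 𝔞 M i s t h where
  map_self t α := by
    have : quotPowProj 𝔞 (le_refl t) = 𝟙 _ := by ext; rfl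
    rw [extTransition_apply, this, Abelian.Ext.mk₀_id_comp]
  map_map s t v hst htv α := by
    simp only [extTransition_apply]
    rw [Abelian.Ext.mk₀_comp_mk₀_assoc]
    congr 2
    ext
    rfl

/-- The direct limit of the modules `Ext^i(R ⧸ 𝔞 ^ t, M)`. -/
abbrev ExtLimit : Type u :=
  Module.DirectLimit (fun t => Abelian.Ext (quotPow 𝔞 t) M i) (extTransition 𝔞 M i)

/-- The colimit cocone which defines the local cohomology module `H^i_𝔞(M)`. -/
noncomputable def localCohomologyCocone :
    Limits.Cocone (localCohomology.diagram (localCohomology.idealPowersDiagram 𝔞) i ⋙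
      (evaluation (ModuleCat.{u} R) (ModuleCat.{u} R)).obj M) :=
  ((evaluation (ModuleCat.{u} R) (ModuleCat.{u} R)).obj M).mapCocone
    (Limits.colimit.cocone (localCohomology.diagram (localCohomology.idealPowersDiagram 𝔞) i))

noncomputable def isColimitLocalCohomologyCocone :
    Limits.IsColimit (localCohomologyCocone 𝔞 M i) :=
  Limits.isColimitOfPreserves _ (Limits.colimit.isColimit _)

/-- The canonical map `Ext^i(R ⧸ 𝔞 ^ t, M) → H^i_𝔞(M)`, on the derived functor model. -/
noncomputable def extModuleToLocalCohomology (t : ℕ) :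
    extModule R i (quotPow 𝔞 t) M →ₗ[R] (localCohomology 𝔞 i).obj M :=
  ((localCohomologyCocone 𝔞 M i).ι.app (op (op t))).hom

/-- The canonical map `Ext^i(R ⧸ 𝔞 ^ t, M) → H^i_𝔞(M)`. -/
noncomputable def extToLocalCohomology (t : ℕ) :
    Abelian.Ext (quotPow 𝔞 t) M i →ₗ[R] (localCohomology 𝔞 i).obj M :=
  extModuleToLocalCohomology 𝔞 M i t ∘ₗ (extModuleEquiv i (quotPow 𝔞 t) M).symm.toLinearMap

variable {𝔞 M i}

lemma extToLocalCohomology_extModuleEquiv {t : ℕ} (x : extModule R i (quotPow 𝔞 t) M) :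
    extToLocalCohomology 𝔞 M i t (extModuleEquiv i _ M x) =
      extModuleToLocalCohomology 𝔞 M i t x := by
  simp [extToLocalCohomology]

lemma extToLocalCohomology_extTransition {s t : ℕ} (h : s ≤ t)
    (α : Abelian.Ext (quotPow 𝔞 s) M i) :
    extToLocalCohomology 𝔞 M i t (extTransition 𝔞 M i s t h α) =
      extToLocalCohomology 𝔞 M i s α := by
  obtain ⟨x, rfl⟩ := (extModuleEquiv i _ M).surjective α
  rw [extTransition_extModuleEquiv, extToLocalCohomology_extModuleEquiv,
    extToLocalCohomology_extModuleEquiv]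
  exact congr($((localCohomologyCocone 𝔞 M i).w (homOfLE h).op.op) x)

lemma exists_extToLocalCohomology_eq (z : (localCohomology 𝔞 i).obj M) :
    ∃ t α, extToLocalCohomology 𝔞 M i t α = z := by
  obtain ⟨j, x, hx⟩ := exists_rep_of_isColimit (isColimitLocalCohomologyCocone 𝔞 M i) z
  exact ⟨j.unop.unop, extModuleEquiv i _ M x, (extToLocalCohomology_extModuleEquiv _).trans hx⟩

lemma exists_extTransition_eq_zero {t : ℕ} {α : Abelian.Ext (quotPow 𝔞 t) M i}
    (hα : extToLocalCohomology 𝔞 M i t α = 0) :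
    ∃ (v : ℕ) (h : t ≤ v), extTransition 𝔞 M i t v h α = 0 := by
  obtain ⟨x, rfl⟩ := (extModuleEquiv i _ M).surjective α
  rw [extToLocalCohomology_extModuleEquiv] at hα
  obtain ⟨j, f, hf⟩ := exists_map_eq_zero_of_isColimit (isColimitLocalCohomologyCocone 𝔞 M i) hα
  refine ⟨j.unop.unop, leOfHom f.unop.unop, ?_⟩
  rw [extTransition_extModuleEquiv]
  exact (congrArg (extModuleEquiv i _ M) hf).trans (map_zero _)

variable (𝔞 M i)

/-- Local cohomology is the direct limit of the modules `Ext^i(R ⧸ 𝔞 ^ t, M)`. -/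
noncomputable def extLimitEquivLocalCohomology :
    ExtLimit 𝔞 M i ≃ₗ[R] (localCohomology 𝔞 i).obj M :=
  LinearEquiv.ofBijective
    (Module.DirectLimit.lift R ℕ _ _ (extToLocalCohomology 𝔞 M i)
      fun _ _ h α => extToLocalCohomology_extTransition h α) <| by
    constructor
    · rw [injective_iff_map_eq_zero]
      intro z hz
      obtain ⟨t, α, rfl⟩ := Module.DirectLimit.exists_of z
      rw [Module.DirectLimit.lift_of] at hz
      obtain ⟨v, h, hv⟩ := exists_extTransition_eq_zero hz
      rw [← Module.DirectLimit.of_f (hij := h), hv, map_zero]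
    · intro z
      obtain ⟨t, α, rfl⟩ := exists_extToLocalCohomology_eq z
      exact ⟨Module.DirectLimit.of R ℕ _ _ t α, Module.DirectLimit.lift_of ..⟩

end LocalCohomology

/-! ### Finite generation of Ext modules -/

section LongExactSequence

variable {A B C : Type u} [AddCommGroup A] [Module R A] [AddCommGroup B] [Module R B]
  [AddCommGroup C] [Module R C] (X : ModuleCat.{u} R)

/-- The map `Ext^i(X, A) → Ext^i(X, B)` induced by a linear map `f : A → B`. -/
noncomputable abbrev extMap (f : A →ₗ[R] B) (i : ℕ) :
    Abelian.Ext X (ModuleCat.of R A) i →ₗ[R] Abelian.Ext X (ModuleCat.of R B) i :=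
  (Abelian.Ext.mk₀ (ModuleCat.ofHom f)).postcompOfLinear R X (add_zero i)

lemma extMap_injective_of_zero {f : A →ₗ[R] B} (hf : Function.Injective f) :
    Function.Injective (extMap X f 0) :=
  have : Mono (ModuleCat.ofHom f) := (ModuleCat.mono_iff_injective _).2 hf
  Abelian.Ext.postcomp_mk₀_injective_of_mono X (ModuleCat.ofHom f)

lemma extMap_extMap (f : A →ₗ[R] B) (g : B →ₗ[R] C) (i : ℕ)
    (α : Abelian.Ext X (ModuleCat.of R A) i) :
    extMap X g i (extMap X f i α) = extMap X (g ∘ₗ f) i α := by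
  simp [Abelian.Ext.comp_assoc_of_second_deg_zero, ← ModuleCat.ofHom_comp]

lemma extMap_id (i : ℕ) (α : Abelian.Ext X (ModuleCat.of R A) i) :
    extMap X LinearMap.id i α = α :=
  Abelian.Ext.comp_mk₀_id α

lemma extMap_lsmul (r : R) (i : ℕ) (α : Abelian.Ext X (ModuleCat.of R A) i) :
    extMap X (LinearMap.lsmul R A r) i α = r • α := by
  rw [Abelian.Ext.smul_eq_comp_mk₀]
  rfl

variable {f : A →ₗ[R] B} {g : B →ₗ[R] C} (hf : Function.Injective f) (hfg : Function.Exact f g)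
  (hg : Function.Surjective g)

include hf hfg hg in
lemma shortExact_of_exact :
    (ModuleCat.shortComplexOfCompEqZero f g hfg.linearMap_comp_eq_zero).ShortExact :=
  ModuleCat.shortComplex_shortExact _ hfg hf hg

/-- The connecting map `Ext^i(X, C) → Ext^(i + 1)(X, A)` of a short exact sequence
`0 → A → B → C → 0`. -/
noncomputable abbrev extConnecting (i : ℕ) :
    Abelian.Ext X (ModuleCat.of R C) i →ₗ[R] Abelian.Ext X (ModuleCat.of R A) (i + 1) :=
  (shortExact_of_exact hf hfg hg).extClass.postcompOfLinear R X rfl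

include hf hfg hg in
lemma exact_extMap_extMap (i : ℕ) : Function.Exact (extMap X f i) (extMap X g i) :=
  (ShortComplex.ab_exact_iff_function_exact _).1
    (Abelian.Ext.covariant_sequence_exact₂' X (shortExact_of_exact hf hfg hg) i)

lemma exact_extMap_extConnecting (i : ℕ) :
    Function.Exact (extMap X g i) (extConnecting X hf hfg hg i) :=
  (ShortComplex.ab_exact_iff_function_exact _).1
    (Abelian.Ext.covariant_sequence_exact₃' X (shortExact_of_exact hf hfg hg) i (i + 1) rfl)

lemma exact_extConnecting_extMap (i : ℕ) :
    Function.Exact (extConnecting X hf hfg hg i) (extMap X f (i + 1)) :=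
  (ShortComplex.ab_exact_iff_function_exact _).1
    (Abelian.Ext.covariant_sequence_exact₁' X (shortExact_of_exact hf hfg hg) i (i + 1) rfl)

end LongExactSequence

section FiniteExt

/-- The condition that `Ext^i(X, N)` is finitely generated. -/
abbrev FiniteExt (X : ModuleCat.{u} R) (N : Type u) [AddCommGroup N] [Module R N] (i : ℕ) : Prop :=
  Module.Finite R (Abelian.Ext X (ModuleCat.of R N) i)

variable [IsNoetherianRing R]

lemma finite_of_exact {A B C : Type*} [AddCommGroup A] [Module R A] [AddCommGroup B] [Module R B]
    [AddCommGroup C] [Module R C] {f : A →ₗ[R] B} {g : B →ₗ[R] C} (hfg : Function.Exact f g)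
    (hA : Module.Finite R A) (hC : Module.Finite R C) : Module.Finite R B :=
  have hfg' : Function.Exact f g.rangeRestrict := fun x => by simp [Subtype.ext_iff, ← hfg x]
  .of_exact hfg' g.surjective_rangeRestrict

variable {A B C : Type u} [AddCommGroup A] [Module R A] [AddCommGroup B] [Module R B]
  [AddCommGroup C] [Module R C] {X : ModuleCat.{u} R} {f : A →ₗ[R] B} {g : B →ₗ[R] C} {i : ℕ}

namespace FiniteExt

lemma of_exact (hf : Function.Injective f) (hfg : Function.Exact f g)
    (hg : Function.Surjective g) (hA : FiniteExt X A i) (hC : FiniteExt X C i) :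
    FiniteExt X B i :=
  finite_of_exact (exact_extMap_extMap X hf hfg hg i) hA hC

lemma of_exact_right (hf : Function.Injective f) (hfg : Function.Exact f g)
    (hg : Function.Surjective g) (hB : FiniteExt X B i) (hA : FiniteExt X A (i + 1)) :
    FiniteExt X C i :=
  finite_of_exact (exact_extMap_extConnecting X hf hfg hg i) hB hA

lemma of_exact_left (hf : Function.Injective f) (hfg : Function.Exact f g)
    (hg : Function.Surjective g) (hC : FiniteExt X C i) (hB : FiniteExt X B (i + 1)) :
    FiniteExt X A (i + 1) :=
  finite_of_exact (exact_extConnecting_extMap X hf hfg hg i) hC hB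

lemma zero_of_injective (hf : Function.Injective f) (hB : FiniteExt X B 0) : FiniteExt X A 0 :=
  have := hB
  Module.Finite.of_injective (extMap X f 0) (extMap_injective_of_zero X hf)

omit [IsNoetherianRing R] in
lemma of_linearEquiv (e : A ≃ₗ[R] B) (hA : FiniteExt X A i) : FiniteExt X B i := by
  refine Module.Finite.of_surjective (extMap X (e : A →ₗ[R] B) i) fun α =>
    ⟨extMap X (e.symm : B →ₗ[R] A) i α, ?_⟩
  rw [extMap_extMap, LinearEquiv.comp_coe, e.symm_trans_self, LinearEquiv.refl_toLinearMap,
    extMap_id]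

lemma quotient {L : Submodule R B} (hB : FiniteExt X B i) (hL : FiniteExt X L (i + 1)) :
    FiniteExt X (B ⧸ L) i :=
  of_exact_right L.subtype_injective (LinearMap.exact_subtype_mkQ L) L.mkQ_surjective hB hL

end FiniteExt

omit [IsNoetherianRing R] in
lemma exact_ker_subtype_rangeRestrict (g : B →ₗ[R] C) :
    Function.Exact (LinearMap.ker g).subtype g.rangeRestrict := fun x => by
  simp [Subtype.ext_iff]

namespace FiniteExt

lemma range (hB : FiniteExt X B i) (hK : FiniteExt X (LinearMap.ker g) (i + 1)) :
    FiniteExt X (LinearMap.range g) i :=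
  of_exact_right (LinearMap.ker g).subtype_injective (exact_ker_subtype_rangeRestrict g)
    g.surjective_rangeRestrict hB hK

lemma ker_succ (hI : FiniteExt X (LinearMap.range g) i) (hB : FiniteExt X B (i + 1)) :
    FiniteExt X (LinearMap.ker g) (i + 1) :=
  of_exact_left (LinearMap.ker g).subtype_injective (exact_ker_subtype_rangeRestrict g)
    g.surjective_rangeRestrict hI hB

end FiniteExt

end FiniteExt

section Cofinite

/-- The condition that every `Ext^i(R ⧸ 𝔞, N)` is finitely generated: `𝔞`-cofiniteness without
the condition on the support. -/
def IsExtCofinite (𝔞 : Ideal R) (N : Type u) [AddCommGroup N] [Module R N] : Prop :=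
  ∀ i, FiniteExt (ModuleCat.of R (R ⧸ 𝔞)) N i

variable {𝔞 : Ideal R} {N : Type u} [AddCommGroup N] [Module R N]

lemma mem_torsionBySet_ideal_iff {M : Type*} [AddCommGroup M] [Module R M] {m : M} :
    m ∈ torsionBySet R M (𝔞 : Set R) ↔ ∀ x ∈ 𝔞, x • m = 0 := by
  simp

lemma apply_mem_torsionBySet_iff {M M' : Type*} [AddCommGroup M] [Module R M] [AddCommGroup M']
    [Module R M'] {f : M →ₗ[R] M'} (hf : Function.Injective f) {s : Set R} {m : M} :
    f m ∈ torsionBySet R M' s ↔ m ∈ torsionBySet R M s := by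
  simp only [Submodule.mem_torsionBySet_iff, ← map_smul, map_eq_zero_iff f hf]

variable (𝔞 N) in
/-- `Hom(R ⧸ 𝔞, N)` is the submodule `0 :_N 𝔞`. -/
noncomputable def homQuotientEquivTorsionBySet :
    ((R ⧸ 𝔞) →ₗ[R] N) ≃ₗ[R] torsionBySet R N (𝔞 : Set R) where
  toFun f := ⟨f 1, mem_torsionBySet_ideal_iff.2 fun x hx => by
    rw [← map_smul, Algebra.smul_def, mul_one, Ideal.Quotient.algebraMap_eq,
      Ideal.Quotient.eq_zero_iff_mem.2 hx, map_zero]⟩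
  map_add' _ _ := rfl
  map_smul' _ _ := rfl
  invFun n := Submodule.liftQ 𝔞 (LinearMap.toSpanSingleton R N n) fun x hx =>
    mem_torsionBySet_ideal_iff.1 n.2 x hx
  left_inv f := Submodule.linearMap_qext _ (LinearMap.ext_ring (one_smul R (f 1)))
  right_inv n := Subtype.ext (one_smul R n.1)

variable (𝔞 N) in
/-- `Ext^0(R ⧸ 𝔞, N)` is the submodule `0 :_N 𝔞`. -/
noncomputable def extZeroEquivTorsionBySet :
    Abelian.Ext (ModuleCat.of R (R ⧸ 𝔞)) (ModuleCat.of R N) 0 ≃ₗ[R]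
      torsionBySet R N (𝔞 : Set R) :=
  Abelian.Ext.linearEquiv₀ (R := R) ≪≫ₗ ModuleCat.homLinearEquiv ≪≫ₗ
    homQuotientEquivTorsionBySet 𝔞 N

lemma finiteExt_zero_iff :
    FiniteExt (ModuleCat.of R (R ⧸ 𝔞)) N 0 ↔ Module.Finite R (torsionBySet R N (𝔞 : Set R)) :=
  Module.Finite.equiv_iff (extZeroEquivTorsionBySet 𝔞 N)

lemma smul_ext_eq_zero {x : R} (hx : x ∈ 𝔞) {Y : ModuleCat.{u} R} {i : ℕ}
    (α : Abelian.Ext (ModuleCat.of R (R ⧸ 𝔞)) Y i) : x • α = 0 := by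
  have hid : x • 𝟙 (ModuleCat.of R (R ⧸ 𝔞)) = 0 := by
    ext
    change algebraMap R (R ⧸ 𝔞) x * 1 = 0
    rw [mul_one, Ideal.Quotient.algebraMap_eq, Ideal.Quotient.eq_zero_iff_mem.2 hx]
  calc x • α = (Abelian.Ext.mk₀ (x • 𝟙 _)).comp α (zero_add i) := by simp [Abelian.Ext.mk₀_smul]
    _ = 0 := by simp [hid]

variable [IsNoetherianRing R]

namespace IsExtCofinite

variable {L : Submodule R N}

omit [IsNoetherianRing R] in
lemma of_linearEquiv {N' : Type u} [AddCommGroup N'] [Module R N'] (e : N ≃ₗ[R] N')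
    (h : IsExtCofinite 𝔞 N) : IsExtCofinite 𝔞 N' :=
  fun i => (h i).of_linearEquiv e

variable (𝔞 N) in
lemma of_finite [Module.Finite R N] : IsExtCofinite 𝔞 N := fun _ => inferInstance

omit [IsNoetherianRing R] in
lemma of_map_subtype {C : Submodule R L} (h : IsExtCofinite 𝔞 (C.map L.subtype)) :
    IsExtCofinite 𝔞 C :=
  h.of_linearEquiv (C.equivMapOfInjective _ L.subtype_injective).symm

lemma of_submodule_quotient (hL : IsExtCofinite 𝔞 L) (hQ : IsExtCofinite 𝔞 (N ⧸ L)) :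
    IsExtCofinite 𝔞 N := fun i =>
  .of_exact L.subtype_injective (LinearMap.exact_subtype_mkQ L) L.mkQ_surjective (hL i) (hQ i)

lemma of_ker_range {N' : Type u} [AddCommGroup N'] [Module R N'] (φ : N →ₗ[R] N')
    (hK : IsExtCofinite 𝔞 (LinearMap.ker φ)) (hI : IsExtCofinite 𝔞 (LinearMap.range φ)) :
    IsExtCofinite 𝔞 N := fun i =>
  .of_exact (LinearMap.ker φ).subtype_injective (exact_ker_subtype_rangeRestrict φ)
    φ.surjective_rangeRestrict (hK i) (hI i)

omit [IsNoetherianRing R] in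
lemma finite_ker_extMap_subtype (hQ : IsExtCofinite 𝔞 (N ⧸ L)) (i : ℕ) :
    Module.Finite R (LinearMap.ker (extMap (ModuleCat.of R (R ⧸ 𝔞)) L.subtype i)) := by
  cases i with
  | zero =>
    rw [LinearMap.ker_eq_bot.2 (extMap_injective_of_zero _ L.subtype_injective)]
    infer_instance
  | succ i =>
    have := hQ i
    rw [(exact_extConnecting_extMap _ L.subtype_injective (LinearMap.exact_subtype_mkQ L)
      L.mkQ_surjective i).linearMap_ker_eq]
    infer_instance

/-- Multiplication by `x` annihilates `Ext^i(R ⧸ 𝔞, N)` and factors through `Ext^i(R ⧸ 𝔞, xN)`, so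
the image of `Ext^i(R ⧸ 𝔞, N)` in the latter comes from `Ext^(i - 1)(R ⧸ 𝔞, N ⧸ xN)`. -/
theorem of_ker_coker_lsmul {x : R} (hx : x ∈ 𝔞)
    (hK : IsExtCofinite 𝔞 (LinearMap.ker (LinearMap.lsmul R N x)))
    (hQ : IsExtCofinite 𝔞 (N ⧸ LinearMap.range (LinearMap.lsmul R N x))) :
    IsExtCofinite 𝔞 N := by
  intro i
  let X := ModuleCat.of R (R ⧸ 𝔞)
  let p := (LinearMap.lsmul R N x).rangeRestrict
  let j := (LinearMap.range (LinearMap.lsmul R N x)).subtype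
  have hjp (α) : extMap X j i (extMap X p i α) = 0 := calc
    _ = extMap X (LinearMap.lsmul R N x) i α := extMap_extMap X p j i α
    _ = 0 := by rw [extMap_lsmul, smul_ext_eq_zero hx]
  let p' : Abelian.Ext X (ModuleCat.of R N) i →ₗ[R] LinearMap.ker (extMap X j i) :=
    (extMap X p i).codRestrict _ hjp
  have hp' : Function.Exact (extMap X (LinearMap.ker (LinearMap.lsmul R N x)).subtype i) p' :=
    fun α => by
      rw [← exact_extMap_extMap X (Submodule.subtype_injective _)
        (exact_ker_subtype_rangeRestrict _) (LinearMap.surjective_rangeRestrict _) i α]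
      exact Subtype.ext_iff
  exact finite_of_exact hp' (hK i) (hQ.finite_ker_extMap_subtype i)

end IsExtCofinite

end Cofinite

/-! ### Artinian torsion modules -/

section Artinian

lemma exists_forall_ge_eq_of_antitone₂ {α : Type*} [PartialOrder α] [WellFoundedLT α]
    {f : ℕ → ℕ → α} (hl : ∀ k, Antitone fun n => f n k) (hr : ∀ n, Antitone (f n)) :
    ∃ n, ∀ m ≥ n, ∀ k, f n k = f m k := by
  have hdiag : Antitone fun n => f n n := fun i j h => (hl j h).trans (hr i h)
  obtain ⟨d, hd⟩ := WellFoundedLT.antitone_chain_condition hdiag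
  choose J hJ using fun k => WellFoundedLT.antitone_chain_condition (hl k)
  refine ⟨(Finset.range d).sup J + d, fun m hm k => ?_⟩
  rcases lt_or_ge k d with hk | hk
  · have hJk : J k ≤ (Finset.range d).sup J + d :=
      (Finset.le_sup (Finset.mem_range.2 hk)).trans (Nat.le_add_right _ _)
    exact (hJ k _ hJk).symm.trans (hJ k m (hJk.trans hm))
  · refine le_antisymm ?_ (hl k hm)
    calc f ((Finset.range d).sup J + d) k ≤ f d d := (hl k (Nat.le_add_left _ _)).trans (hr d hk)
      _ = f (max m k) (max m k) := hd _ (hk.trans (le_max_right _ _))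
      _ ≤ f m k := (hl _ (le_max_left _ _)).trans (hr m (le_max_right _ _))

variable {N : Type*} [AddCommGroup N] [Module R N]

/-- The elements of `x ^ k • L` annihilated by `x`; letting `k` vary, these determine `L` among the
submodules of an `x`-power torsion module. -/
def kerInfPowSMul (x : R) (L : Submodule R N) (k : ℕ) :
    Submodule R (LinearMap.ker (LinearMap.lsmul R N x)) :=
  (L.map (LinearMap.lsmul R N (x ^ k))).comap (Submodule.subtype _)

variable {x : R} {L L' : Submodule R N} {k : ℕ}

lemma mem_kerInfPowSMul {z : LinearMap.ker (LinearMap.lsmul R N x)} :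
    z ∈ kerInfPowSMul x L k ↔ ∃ n ∈ L, x ^ k • n = z := by
  simp [kerInfPowSMul]

lemma kerInfPowSMul_mono (h : L ≤ L') : kerInfPowSMul x L k ≤ kerInfPowSMul x L' k :=
  Submodule.comap_mono (Submodule.map_mono h)

lemma kerInfPowSMul_antitone : Antitone (kerInfPowSMul x L) := by
  intro i j hij z hz
  obtain ⟨n, hn, hz⟩ := mem_kerInfPowSMul.1 hz
  refine mem_kerInfPowSMul.2 ⟨x ^ (j - i) • n, L.smul_mem _ hn, ?_⟩
  rw [smul_smul, ← pow_add, Nat.add_sub_cancel' hij, hz]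

lemma mem_of_kerInfPowSMul_le (h : L' ≤ L) (hk : ∀ k, kerInfPowSMul x L k ≤ kerInfPowSMul x L' k)
    {m : ℕ} {n : N} (hn : n ∈ L) (hx : x ^ m • n = 0) : n ∈ L' := by
  induction m generalizing n with
  | zero => simp_all
  | succ m ih =>
    have hker : x ^ m • n ∈ LinearMap.ker (LinearMap.lsmul R N x) := by
      rw [LinearMap.mem_ker, LinearMap.lsmul_apply, smul_smul, ← pow_succ', hx]
    obtain ⟨n', hn', heq⟩ :=
      mem_kerInfPowSMul.1 (hk m (mem_kerInfPowSMul.2 ⟨n, hn, rfl⟩ : ⟨_, hker⟩ ∈ _))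
    have hsub : n - n' ∈ L' := ih (L.sub_mem hn (h hn')) (by rw [smul_sub, heq, sub_self])
    simpa using L'.add_mem hsub hn'

theorem isArtinian_of_ker_lsmul (hx : ∀ n : N, ∃ k : ℕ, x ^ k • n = 0)
    [IsArtinian R (LinearMap.ker (LinearMap.lsmul R N x))] : IsArtinian R N := by
  rw [← monotone_stabilizes_iff_artinian]
  intro L
  have hL {i j : ℕ} (h : i ≤ j) : (L j).ofDual ≤ (L i).ofDual := L.monotone h
  obtain ⟨n, hn⟩ := exists_forall_ge_eq_of_antitone₂
    (f := fun n => kerInfPowSMul x (L n).ofDual) (fun _ _ _ h => kerInfPowSMul_mono (hL h))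
    fun _ => kerInfPowSMul_antitone
  refine ⟨n, fun m hm => le_antisymm (α := Submodule R N) (fun y hy => ?_) (hL hm)⟩
  obtain ⟨k, hk⟩ := hx y
  exact mem_of_kerInfPowSMul_le (hL hm) (fun k => (hn m hm k).le) hy hk

/-- The condition that every element of `N` is annihilated by a power of `𝔞`. -/
def IsPowTorsion (𝔞 : Ideal R) (N : Type*) [AddCommGroup N] [Module R N] : Prop :=
  ∀ n : N, ∃ k : ℕ, n ∈ torsionBySet R N ((𝔞 ^ k : Ideal R) : Set R)

namespace IsPowTorsion

variable {𝔞 𝔟 : Ideal R} {N' : Type*} [AddCommGroup N'] [Module R N']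

lemma exists_pow_smul_eq_zero (h : IsPowTorsion 𝔞 N) (hx : x ∈ 𝔞) (n : N) :
    ∃ k : ℕ, x ^ k • n = 0 :=
  (h n).imp fun _ hk => mem_torsionBySet_ideal_iff.1 hk _ (Ideal.pow_mem_pow hx _)

lemma mono (hab : 𝔟 ≤ 𝔞) (h : IsPowTorsion 𝔞 N) : IsPowTorsion 𝔟 N := fun n =>
  (h n).imp fun k hk =>
    Submodule.torsionBySet_le_torsionBySet_of_subset (Ideal.pow_right_mono hab k) hk

lemma of_injective (h : IsPowTorsion 𝔞 N') {f : N →ₗ[R] N'} (hf : Function.Injective f) :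
    IsPowTorsion 𝔞 N := fun n => (h (f n)).imp fun _ => (apply_mem_torsionBySet_iff hf).1

lemma of_surjective (h : IsPowTorsion 𝔞 N) {f : N →ₗ[R] N'} (hf : Function.Surjective f) :
    IsPowTorsion 𝔞 N' := fun n' => by
  obtain ⟨n, rfl⟩ := hf n'
  refine (h n).imp fun k hk => ?_
  rw [mem_torsionBySet_ideal_iff] at hk ⊢
  exact fun x hx => by rw [← map_smul, hk x hx, map_zero]

theorem isArtinian (h𝔞 : 𝔞.FG) (h : IsPowTorsion 𝔞 N)
    (hart : IsArtinian R (torsionBySet R N (𝔞 : Set R))) : IsArtinian R N := by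
  induction 𝔞, h𝔞 using Submodule.fg_induction generalizing N with
  | singleton x =>
    have hx : x ∈ Ideal.span {x} := Ideal.mem_span_singleton_self x
    have heq : torsionBySet R N (Ideal.span {x} : Set R) = LinearMap.ker (LinearMap.lsmul R N x) :=
      Submodule.torsionBySet_span_singleton_eq x
    have : IsArtinian R (LinearMap.ker (LinearMap.lsmul R N x)) := heq ▸ hart
    exact isArtinian_of_ker_lsmul (h.exists_pow_smul_eq_zero hx)
  | sup 𝔟 𝔠 _ _ ih𝔟 ih𝔠 =>
    refine ih𝔟 (h.mono le_sup_left) (ih𝔠 ((h.mono le_sup_right).of_injective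
      (Submodule.subtype_injective _)) ?_)
    let φ : torsionBySet R (torsionBySet R N (𝔟 : Set R)) (𝔠 : Set R) →ₗ[R]
        torsionBySet R N ((𝔟 ⊔ 𝔠 : Ideal R) : Set R) :=
      (Submodule.subtype _ ∘ₗ Submodule.subtype _).codRestrict _ fun n => by
        rw [mem_torsionBySet_ideal_iff]
        intro x hx
        obtain ⟨y, hy, z, hz, rfl⟩ := Submodule.mem_sup.1 hx
        have hy0 := mem_torsionBySet_ideal_iff.1 n.1.2 y hy
        have hz0 := congrArg Subtype.val (mem_torsionBySet_ideal_iff.1 n.2 z hz)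
        exact (add_smul y z _).trans (by simp_all)
    refine isArtinian_of_injective φ fun u v huv => ?_
    have hval := congrArg Subtype.val huv
    exact Subtype.ext (Subtype.ext hval)

end IsPowTorsion

end Artinian

/-! ### Cofiniteness of torsion modules -/

section ArtinianCofinite

lemma map_subtype_lt {N : Type*} [AddCommGroup N] [Module R N] {B : Submodule R N}
    {C : Submodule R B} (hC : C ≠ ⊤) : C.map B.subtype < B :=
  (Submodule.map_subtype_le B C).lt_of_ne fun h =>
    hC (Submodule.map_injective_of_injective B.subtype_injective (by simpa using h))

variable [IsNoetherianRing R] {𝔞 : Ideal R}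

lemma IsExtCofinite.of_forall_ne_top {B : Type u} [AddCommGroup B] [Module R B]
    (hB : FiniteExt (ModuleCat.of R (R ⧸ 𝔞)) B 0)
    (h : ∀ C : Submodule R B, C ≠ ⊤ → IsExtCofinite 𝔞 C) : IsExtCofinite 𝔞 B := by
  by_cases hker : ∃ x ∈ 𝔞, LinearMap.ker (LinearMap.lsmul R B x) ≠ ⊤
  · obtain ⟨x, hx, hk⟩ := hker
    by_cases hr : LinearMap.range (LinearMap.lsmul R B x) = ⊤
    · have := Submodule.Quotient.subsingleton_iff.2 hr
      exact .of_ker_coker_lsmul hx (h _ hk) (.of_finite 𝔞 _)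
    · exact .of_ker_range _ (h _ hk) (h _ hr)
  · push Not at hker
    have htop : torsionBySet R B (𝔞 : Set R) = ⊤ :=
      Submodule.eq_top_iff'.2 fun b => mem_torsionBySet_ideal_iff.2 fun x hx =>
        LinearMap.mem_ker.1 (hker x hx ▸ Submodule.mem_top)
    rw [finiteExt_zero_iff, htop] at hB
    have := Module.Finite.equiv (Submodule.topEquiv (R := R) (M := B))
    exact .of_finite 𝔞 B

theorem IsExtCofinite.of_isArtinian {A : Type u} [AddCommGroup A] [Module R A] [IsArtinian R A]
    (hA : FiniteExt (ModuleCat.of R (R ⧸ 𝔞)) A 0) : IsExtCofinite 𝔞 A := by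
  suffices h : ∀ B : Submodule R A, IsExtCofinite 𝔞 B from (h ⊤).of_linearEquiv Submodule.topEquiv
  intro B
  induction B using WellFoundedLT.induction with
  | ind B ih =>
    exact .of_forall_ne_top (hA.zero_of_injective B.subtype_injective) fun C hC =>
      .of_map_subtype (ih _ (map_subtype_lt hC))

end ArtinianCofinite

section MultiplicativeTorsion

variable {S : Submonoid R} {N : Type*} [AddCommGroup N] [Module R N]

lemma isTorsion'_quotient_iff {L : Submodule R N} :
    Module.IsTorsion' (N ⧸ L) S ↔ ∀ n : N, ∃ s : S, s • n ∈ L := by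
  refine L.mkQ_surjective.forall.trans (forall_congr' fun n => exists_congr fun s => ?_)
  exact Submodule.Quotient.mk_eq_zero L

lemma exists_smul_eq_zero_of_isTorsion' [Module.Finite R N] (h : Module.IsTorsion' N S) :
    ∃ s : S, ∀ n : N, s • n = 0 := by
  classical
  obtain ⟨T, hT⟩ := Module.Finite.fg_top (R := R) (M := N)
  choose s hs using fun n => @h n
  refine ⟨∏ n ∈ T, s n, fun n => ?_⟩
  induction hT ▸ Submodule.mem_top (x := n) using Submodule.span_induction with
  | mem n hn => rw [← Finset.prod_erase_mul _ _ hn, mul_smul, hs, smul_zero]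
  | zero => exact smul_zero _
  | add n n' _ _ hn hn' => rw [smul_add, hn, hn', add_zero]
  | smul r n _ hn => rw [smul_comm, hn, smul_zero]

lemma exists_smul_mem_torsionBySet [IsNoetherianRing R] {𝔞 : Ideal R} {n : N}
    (h : ∀ x ∈ 𝔞, ∃ s : S, s • x • n = 0) : ∃ s : S, s • n ∈ torsionBySet R N (𝔞 : Set R) := by
  let φ : 𝔞 →ₗ[R] N := (LinearMap.toSpanSingleton R N n).domRestrict 𝔞
  have hφ : Module.IsTorsion' (LinearMap.range φ) S := by
    rintro ⟨_, x, rfl⟩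
    exact (h x x.2).imp fun s hs => Subtype.ext hs
  obtain ⟨s, hs⟩ := exists_smul_eq_zero_of_isTorsion' hφ
  refine ⟨s, mem_torsionBySet_ideal_iff.2 fun x hx => ?_⟩
  rw [smul_comm]
  exact congrArg Subtype.val (hs ⟨_, ⟨x, hx⟩, rfl⟩)

end MultiplicativeTorsion

section Localization

variable {S : Submonoid R} (R' : Type*) [CommRing R'] [Algebra R R'] [IsLocalization S R']
  {N N' : Type*} [AddCommGroup N] [Module R N] [AddCommGroup N'] [Module R N'] [Module R' N']
  [IsScalarTower R R' N'] (f : N →ₗ[R] N') [IsLocalizedModule S f] {𝔞 : Ideal R}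

lemma exists_smul_mem_of_localized'_le {L L' : Submodule R N}
    (h : L.localized' R' S f ≤ L'.localized' R' S f) (n : N) (hn : n ∈ L) :
    ∃ s : S, s • n ∈ L' := by
  obtain ⟨n', hn', s, hs⟩ := h ⟨n, hn, 1, IsLocalizedModule.mk'_one S f n⟩
  rw [IsLocalizedModule.mk'_eq_iff, ← LinearMap.map_smul_of_tower] at hs
  obtain ⟨t, ht⟩ := (IsLocalizedModule.eq_iff_exists S f).1 hs
  refine ⟨t * s, ?_⟩
  rw [mul_smul, ← ht]
  exact L'.smul_of_tower_mem t hn'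

lemma localized'_map_subtype_lt {B : Submodule R N} {C : Submodule R B}
    (hC : ¬ Module.IsTorsion' (B ⧸ C) S) :
    (C.map B.subtype).localized' R' S f < B.localized' R' S f := by
  refine lt_of_le_not_ge ((Submodule.localized'gi R' S f).gc.monotone_l
    (Submodule.map_subtype_le B C)) fun h => hC (isTorsion'_quotient_iff.2 fun b => ?_)
  obtain ⟨s, c, hc, hcb⟩ := exists_smul_mem_of_localized'_le R' f h b b.2
  exact ⟨s, (Subtype.ext hcb : c = s • b) ▸ hc⟩

lemma localized'_torsionBySet [IsNoetherianRing R] (𝔞 : Ideal R) :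
    (torsionBySet R N (𝔞 : Set R)).localized' R' S f =
      torsionBySet R' N' (𝔞.map (algebraMap R R') : Set R') := by
  have hmem (z : N') : z ∈ torsionBySet R' N' (𝔞.map (algebraMap R R') : Set R') ↔
      ∀ x ∈ 𝔞, x • z = 0 := by
    rw [Ideal.map, Ideal.span, ← Submodule.torsionBySet_eq_torsionBySet_span]
    simp
  ext z
  obtain ⟨⟨n, s⟩, rfl⟩ := IsLocalizedModule.mk'_surjective S f z
  rw [hmem, Submodule.mem_localized']
  constructor
  · rintro ⟨m, hm, t, heq⟩ x hx
    rw [← heq, ← IsLocalizedModule.mk'_smul, mem_torsionBySet_ideal_iff.1 hm x hx,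
      IsLocalizedModule.mk'_zero]
  · intro h
    obtain ⟨t, ht⟩ : ∃ t : S, t • n ∈ torsionBySet R N (𝔞 : Set R) :=
      exists_smul_mem_torsionBySet fun x hx => by
        have hx0 := h x hx
        rwa [Function.uncurry_apply_pair, ← IsLocalizedModule.mk'_smul,
          IsLocalizedModule.mk'_eq_zero, IsLocalizedModule.eq_zero_iff S] at hx0
    exact ⟨t • n, ht, t * s, IsLocalizedModule.mk'_cancel_left f n t s⟩

include S f in
lemma IsPowTorsion.of_isLocalizedModule [IsNoetherianRing R] (h : IsPowTorsion 𝔞 N) :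
    IsPowTorsion (𝔞.map (algebraMap R R')) N' := by
  intro z
  obtain ⟨⟨n, s⟩, rfl⟩ := IsLocalizedModule.mk'_surjective S f z
  refine (h n).imp fun k hk => ?_
  rw [← Ideal.map_pow, ← localized'_torsionBySet (S := S) R' f]
  exact ⟨n, hk, s, rfl⟩

end Localization

section DimensionOne

lemma isArtinian_of_isTorsionBySet {N : Type*} [AddCommGroup N] [Module R N] [Module.Finite R N]
    {I : Ideal R} [IsArtinianRing (R ⧸ I)] (h : Module.IsTorsionBySet R N (I : Set R)) :
    IsArtinian R N := by
  let := h.module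
  have := h.isScalarTower (S := R)
  have : Module.Finite (R ⧸ I) N := .of_restrictScalars_finite R (R ⧸ I) N
  exact isArtinian_of_surjective_algebraMap (R := R ⧸ I) Ideal.Quotient.mk_surjective

/-- The multiplicative set of elements outside every minimal prime of `𝔞`. -/
def minimalPrimesCompl (𝔞 : Ideal R) : Submonoid R where
  carrier := {s | ∀ p ∈ 𝔞.minimalPrimes, s ∉ p}
  one_mem' := fun _ hp => hp.1.1.one_notMem
  mul_mem' := fun hs ht p hp h => (hp.1.1.mem_or_mem h).elim (hs p hp) (ht p hp)

lemma isMaximal_of_notMem_minimalPrimes {𝔞 p : Ideal R} [Ring.KrullDimLE 1 (R ⧸ 𝔞)]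
    [p.IsPrime] (h : 𝔞 ≤ p) (hp : p ∉ 𝔞.minimalPrimes) : p.IsMaximal := by
  have hcomap : (p.map (Ideal.Quotient.mk 𝔞)).comap (Ideal.Quotient.mk 𝔞) = p := by
    rw [Ideal.comap_map_quotientMk, sup_eq_right.2 h]
  have hprime : (p.map (Ideal.Quotient.mk 𝔞)).IsPrime :=
    Ideal.map_isPrime_of_surjective Ideal.Quotient.mk_surjective (by simpa using h)
  have hmax := (Ring.krullDimLE_one_iff.1 inferInstance _ hprime).resolve_left fun hmin =>
    hp (by rw [Ideal.minimalPrimes_eq_comap]; exact ⟨_, hmin, hcomap⟩)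
  exact hcomap ▸ Ideal.comap_isMaximal_of_surjective _ Ideal.Quotient.mk_surjective

variable [IsNoetherianRing R] {𝔞 : Ideal R}

lemma isArtinianRing_quotient_sup_span [Ring.KrullDimLE 1 (R ⧸ 𝔞)] {s : R}
    (hs : s ∈ minimalPrimesCompl 𝔞) : IsArtinianRing (R ⧸ 𝔞 ⊔ Ideal.span {s}) := by
  rw [isArtinianRing_iff_isNoetherianRing_krullDimLE_zero,
    Ideal.krullDimLE_zero_quotient_iff_forall_minimalPrimes_isMaximal]
  refine ⟨inferInstance, fun p hp => ?_⟩
  have := hp.1.1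
  exact isMaximal_of_notMem_minimalPrimes (le_sup_left.trans hp.1.2) fun hmin =>
    hs p hmin (hp.1.2 (Ideal.mem_sup_right (Ideal.mem_span_singleton_self s)))

lemma exists_le_of_disjoint_minimalPrimesCompl {I : Ideal R}
    (h : Disjoint (minimalPrimesCompl 𝔞 : Set R) I) : ∃ p ∈ 𝔞.minimalPrimes, I ≤ p := by
  have hfin := Ideal.finite_minimalPrimes_of_isNoetherianRing R 𝔞
  have hsub : (I : Set R) ⊆ ⋃ p ∈ (hfin.toFinset : Set (Ideal R)), (p : Set R) := by
    intro x hx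
    by_contra hx'
    exact Set.disjoint_left.1 h (fun p hp hxp => hx' (by simpa using ⟨p, hp, hxp⟩)) hx
  obtain ⟨p, hp, hIp⟩ := (Ideal.subset_union_prime ⊥ ⊥
    fun p hp _ _ => (hfin.mem_toFinset.1 hp).1.1).1 hsub
  exact ⟨p, hfin.mem_toFinset.1 hp, hIp⟩

lemma isArtinianRing_quotient_map_localization :
    IsArtinianRing (Localization (minimalPrimesCompl 𝔞) ⧸
      𝔞.map (algebraMap R (Localization (minimalPrimesCompl 𝔞)))) := by
  let S := minimalPrimesCompl 𝔞
  have : IsNoetherianRing (Localization S) := IsLocalization.isNoetherianRing S _ inferInstance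
  rw [isArtinianRing_iff_isNoetherianRing_krullDimLE_zero,
    Ideal.krullDimLE_zero_quotient_iff_forall_minimalPrimes_isMaximal]
  refine ⟨inferInstance, fun P hP => ?_⟩
  obtain ⟨Q, hQ, hPQ⟩ := Ideal.exists_le_maximal P hP.1.1.ne_top
  rw [IsLocalization.minimalPrimes_map S] at hP
  obtain ⟨p, hp, hQp⟩ := exists_le_of_disjoint_minimalPrimesCompl
    ((IsLocalization.isPrime_iff_isPrime_disjoint S _ Q).1 hQ.isPrime).2
  have hpP : p ≤ P.under R := hp.2 hP.1 ((Ideal.comap_mono hPQ).trans hQp)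
  have hQP : Q ≤ P := by
    rw [← IsLocalization.map_under S _ Q, ← IsLocalization.map_under S _ P]
    exact Ideal.map_mono (hQp.trans hpP)
  exact le_antisymm hQP hPQ ▸ hQ

variable {N : Type u} [AddCommGroup N] [Module R N]

lemma isArtinian_localizedModule (hN : IsPowTorsion 𝔞 N)
    (hN₀ : FiniteExt (ModuleCat.of R (R ⧸ 𝔞)) N 0) :
    IsArtinian (Localization (minimalPrimesCompl 𝔞))
      (LocalizedModule (minimalPrimesCompl 𝔞) N) := by
  let S := minimalPrimesCompl 𝔞
  let f := LocalizedModule.mkLinearMap S N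
  have : IsNoetherianRing (Localization S) := IsLocalization.isNoetherianRing S _ inferInstance
  have hfin : Module.Finite (Localization S) (torsionBySet (Localization S) (LocalizedModule S N)
      (𝔞.map (algebraMap R (Localization S)) : Set (Localization S))) := by
    rw [← localized'_torsionBySet (S := S) _ f, Module.Finite.iff_fg]
    exact Submodule.localized'_fg _ S f (Module.Finite.iff_fg.1 (finiteExt_zero_iff.1 hN₀))
  have := isArtinianRing_quotient_map_localization (𝔞 := 𝔞)
  exact (hN.of_isLocalizedModule (S := S) (Localization S) f).isArtinian (IsNoetherian.noetherian _)
    (isArtinian_of_isTorsionBySet (Submodule.torsionBySet_isTorsionBySet _))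

variable [Ring.KrullDimLE 1 (R ⧸ 𝔞)]

lemma IsExtCofinite.of_isTorsion'_minimalPrimesCompl (hN : IsPowTorsion 𝔞 N)
    (hS : Module.IsTorsion' N (minimalPrimesCompl 𝔞))
    (hN₀ : FiniteExt (ModuleCat.of R (R ⧸ 𝔞)) N 0) : IsExtCofinite 𝔞 N := by
  have hfin := finiteExt_zero_iff.1 hN₀
  have hS' : Module.IsTorsion' (torsionBySet R N (𝔞 : Set R)) (minimalPrimesCompl 𝔞) :=
    fun n => (hS (x := n.1)).imp fun s hs => Subtype.ext hs
  obtain ⟨s, hs⟩ := exists_smul_eq_zero_of_isTorsion' hS'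
  have := isArtinianRing_quotient_sup_span s.2
  have hann : Module.IsTorsionBySet R (torsionBySet R N (𝔞 : Set R))
      (𝔞 ⊔ Ideal.span {s.1} : Ideal R) := by
    rw [Module.isTorsionBySet_iff_subset_annihilator, SetLike.coe_subset_coe, sup_le_iff,
      Ideal.span_singleton_le_iff_mem, Module.mem_annihilator]
    exact ⟨(Module.isTorsionBySet_iff_subset_annihilator _ _).1
      (Submodule.torsionBySet_isTorsionBySet _), hs⟩
  have := hN.isArtinian (IsNoetherian.noetherian 𝔞) (isArtinian_of_isTorsionBySet hann)
  exact .of_isArtinian hN₀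

lemma IsExtCofinite.of_forall_not_isTorsion'_quotient (hN : IsPowTorsion 𝔞 N)
    (hN₀ : FiniteExt (ModuleCat.of R (R ⧸ 𝔞)) N 0) (hN₁ : FiniteExt (ModuleCat.of R (R ⧸ 𝔞)) N 1)
    (h : ∀ L : Submodule R N, ¬ Module.IsTorsion' (N ⧸ L) (minimalPrimesCompl 𝔞) →
      FiniteExt (ModuleCat.of R (R ⧸ 𝔞)) L 1 → IsExtCofinite 𝔞 L) : IsExtCofinite 𝔞 N := by
  have hquot (L : Submodule R N) (hS : Module.IsTorsion' (N ⧸ L) (minimalPrimesCompl 𝔞))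
      (hL : FiniteExt (ModuleCat.of R (R ⧸ 𝔞)) L 1) : IsExtCofinite 𝔞 (N ⧸ L) :=
    .of_isTorsion'_minimalPrimesCompl (hN.of_surjective L.mkQ_surjective) hS (hN₀.quotient hL)
  by_cases hker : ∃ x ∈ 𝔞, ¬ Module.IsTorsion' (N ⧸ LinearMap.ker (LinearMap.lsmul R N x))
      (minimalPrimesCompl 𝔞)
  · obtain ⟨x, hx, hxS⟩ := hker
    have hK := h _ hxS (.ker_succ (.zero_of_injective (Submodule.subtype_injective _) hN₀) hN₁)
    have hI₁ := hN₁.range (hK 2)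
    by_cases hr : Module.IsTorsion' (N ⧸ LinearMap.range (LinearMap.lsmul R N x))
        (minimalPrimesCompl 𝔞)
    · exact .of_ker_coker_lsmul hx hK (hquot _ hr hI₁)
    · exact .of_ker_range _ hK (h _ hr hI₁)
  · push Not at hker
    have := finiteExt_zero_iff.1 hN₀
    have hfin : IsExtCofinite 𝔞 (torsionBySet R N (𝔞 : Set R)) := .of_finite 𝔞 _
    refine .of_submodule_quotient hfin (hquot _ (isTorsion'_quotient_iff.2 fun n => ?_) (hfin 1))
    refine exists_smul_mem_torsionBySet fun x hx => ?_
    refine (isTorsion'_quotient_iff.1 (hker x hx) n).imp fun s hs => ?_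
    rw [smul_comm]
    exact hs

theorem IsExtCofinite.of_isPowTorsion (hN : IsPowTorsion 𝔞 N)
    (hN₀ : FiniteExt (ModuleCat.of R (R ⧸ 𝔞)) N 0)
    (hN₁ : FiniteExt (ModuleCat.of R (R ⧸ 𝔞)) N 1) : IsExtCofinite 𝔞 N := by
  let S := minimalPrimesCompl 𝔞
  let f := LocalizedModule.mkLinearMap S N
  have := isArtinian_localizedModule hN hN₀
  suffices h : ∀ B : Submodule R N, FiniteExt (ModuleCat.of R (R ⧸ 𝔞)) B 1 → IsExtCofinite 𝔞 B from
    (h ⊤ (hN₁.of_linearEquiv Submodule.topEquiv.symm)).of_linearEquiv Submodule.topEquiv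
  intro B
  induction B using (InvImage.wf (fun B : Submodule R N => B.localized' (Localization S) S f)
    wellFounded_lt).induction with
  | _ B ih =>
    intro hB₁
    refine .of_forall_not_isTorsion'_quotient (hN.of_injective B.subtype_injective)
      (hN₀.zero_of_injective B.subtype_injective) hB₁ fun C hC hC₁ => ?_
    exact .of_map_subtype (ih _ (localized'_map_subtype_lt (Localization S) f hC)
      (hC₁.of_linearEquiv (C.equivMapOfInjective _ B.subtype_injective)))

end DimensionOne

/-! ### Torsion in injective modules -/

section PrimaryComponent

variable {𝔞 : Ideal R} {N N' : Type*} [AddCommGroup N] [Module R N] [AddCommGroup N'] [Module R N']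

variable (𝔞 N) in
lemma isPowTorsion_primaryComponent : IsPowTorsion 𝔞 (𝔞.primaryComponent N) := fun n =>
  ((𝔞.primaryComponent_mem N n.1).1 n.2).imp fun _ =>
    (apply_mem_torsionBySet_iff (Submodule.subtype_injective _)).1

lemma IsPowTorsion.apply_mem_primaryComponent (h : IsPowTorsion 𝔞 N) (f : N →ₗ[R] N') (n : N) :
    f n ∈ 𝔞.primaryComponent N' :=
  𝔞.primaryComponent_map_mem f ⟨n, (𝔞.primaryComponent_mem N n).2 (h n)⟩

lemma torsionBySet_pow_eq_bot (h : torsionBySet R N (𝔞 : Set R) = ⊥) (k : ℕ) :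
    torsionBySet R N ((𝔞 ^ k : Ideal R) : Set R) = ⊥ := by
  induction k with
  | zero => simp
  | succ k ih =>
    refine (Submodule.eq_bot_iff _).2 fun n hn => ?_
    rw [mem_torsionBySet_ideal_iff] at hn
    have hxn (x) (hx : x ∈ 𝔞) : x • n ∈ torsionBySet R N ((𝔞 ^ k : Ideal R) : Set R) :=
      mem_torsionBySet_ideal_iff.2 fun y hy => by
        rw [← mul_smul, hn _ (pow_succ 𝔞 k ▸ Ideal.mul_mem_mul hy hx)]
    have hn' : n ∈ torsionBySet R N (𝔞 : Set R) :=
      mem_torsionBySet_ideal_iff.2 fun x hx => by simpa [ih] using hxn x hx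
    simpa [h] using hn'

lemma primaryComponent_eq_bot (h : torsionBySet R N (𝔞 : Set R) = ⊥) :
    𝔞.primaryComponent N = ⊥ :=
  (Submodule.eq_bot_iff _).2 fun n hn => by
    obtain ⟨k, hk⟩ := (𝔞.primaryComponent_mem N n).1 hn
    simpa [torsionBySet_pow_eq_bot h] using hk

lemma IsPowTorsion.exists_pow_le_annihilator [Module.Finite R N] (h : IsPowTorsion 𝔞 N) :
    ∃ k : ℕ, 𝔞 ^ k ≤ Module.annihilator R N := by
  obtain ⟨T, hT⟩ := Module.Finite.fg_top (R := R) (M := N)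
  choose k hk using h
  have hspan : ⊤ ≤ torsionBySet R N ((𝔞 ^ T.sup k : Ideal R) : Set R) := by
    rw [← hT, Submodule.span_le]
    exact fun n hn => Submodule.torsionBySet_le_torsionBySet_pow _ _ (Finset.le_sup hn) 𝔞 (hk n)
  exact ⟨T.sup k, fun x hx => Module.mem_annihilator.2 fun n =>
    mem_torsionBySet_ideal_iff.1 (hspan Submodule.mem_top) x hx⟩

lemma torsionBySet_quotient_primaryComponent (h𝔞 : 𝔞.FG) :
    torsionBySet R (N ⧸ 𝔞.primaryComponent N) (𝔞 : Set R) = ⊥ := by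
  refine (Submodule.eq_bot_iff _).2 fun q hq => ?_
  obtain ⟨n, rfl⟩ := Submodule.Quotient.mk_surjective _ q
  rw [mem_torsionBySet_ideal_iff] at hq
  let L := Submodule.map (LinearMap.toSpanSingleton R N n) 𝔞
  have hL : L ≤ 𝔞.primaryComponent N := by
    rintro _ ⟨x, hx, rfl⟩
    exact (Submodule.Quotient.mk_eq_zero _).1 (hq x hx)
  have : Module.Finite R L := .of_fg (Submodule.FG.map _ h𝔞)
  obtain ⟨k, hk⟩ := ((isPowTorsion_primaryComponent 𝔞 N).of_injective
    (Submodule.inclusion_injective hL)).exists_pow_le_annihilator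
  have hbot : Submodule.map (LinearMap.toSpanSingleton R N n) (𝔞 ^ k • 𝔞) = ⊥ := by
    rw [Submodule.map_smul'']
    exact Submodule.le_annihilator_iff.1 hk
  rw [Submodule.Quotient.mk_eq_zero, Ideal.primaryComponent_mem]
  refine ⟨k + 1, mem_torsionBySet_ideal_iff.2 fun x hx => ?_⟩
  rw [pow_succ, ← smul_eq_mul] at hx
  exact (Submodule.eq_bot_iff _).1 hbot _ ⟨x, hx, rfl⟩

/-- By Artin–Rees, the kernel is open in the `𝔞`-adic topology induced from `M`. -/
lemma IsPowTorsion.exists_forall_mem_pow_smul_top_eq_zero [IsNoetherianRing R] {M : Type*}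
    [AddCommGroup M] [Module R M] [Module.Finite R M] (h : IsPowTorsion 𝔞 N) {L : Submodule R M}
    (g : L →ₗ[R] N) : ∃ n : ℕ, ∀ y : L, (y : M) ∈ 𝔞 ^ n • (⊤ : Submodule R M) → g y = 0 := by
  obtain ⟨k, hk⟩ :=
    (h.of_injective (LinearMap.range g).subtype_injective).exists_pow_le_annihilator
  obtain ⟨c, hc⟩ := 𝔞.exists_pow_inf_eq_pow_smul L
  refine ⟨k + c, fun y hy => ?_⟩
  have hyL : (y : M) ∈ Submodule.map L.subtype (𝔞 ^ k • ⊤) := by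
    rw [Submodule.map_smul'', Submodule.map_subtype_top]
    have hmem : (y : M) ∈ 𝔞 ^ (k + c) • (⊤ : Submodule R M) ⊓ L := ⟨hy, y.2⟩
    rw [hc _ (Nat.le_add_left c k), Nat.add_sub_cancel] at hmem
    exact Submodule.smul_mono le_rfl inf_le_right hmem
  have hgy : g y ∈ Submodule.map g (𝔞 ^ k • ⊤) :=
    Submodule.mem_map_of_mem (L.subtype_injective.mem_set_image.1 hyL)
  rwa [Submodule.map_smul'', ← LinearMap.range_eq_map, Submodule.le_annihilator_iff.1 hk] at hgy

end PrimaryComponent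

section Injective

section Extension

variable {A B E : Type u} [AddCommGroup A] [Module R A] [AddCommGroup B] [Module R B]
  [AddCommGroup E] [Module R E] [Module.Injective R E]

lemma exists_comp_eq_of_ker_le (j : A →ₗ[R] B) {φ : A →ₗ[R] E}
    (h : LinearMap.ker j ≤ LinearMap.ker φ) : ∃ e : B →ₗ[R] E, e ∘ₗ j = φ := by
  obtain ⟨e, he⟩ := Module.Injective.extension_property R E _ B ((LinearMap.ker j).liftQ j le_rfl)
    (LinearMap.ker_eq_bot.1 (Submodule.ker_liftQ_eq_bot _ _ _ le_rfl)) ((LinearMap.ker j).liftQ φ h)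
  refine ⟨e, ?_⟩
  rw [← (LinearMap.ker j).liftQ_mkQ j le_rfl, ← LinearMap.comp_assoc, he, Submodule.liftQ_mkQ]

lemma injective_of_leftInverse {Q : Type u} [AddCommGroup Q] [Module R Q] {s : Q →ₗ[R] E}
    {p : E →ₗ[R] Q} (h : p ∘ₗ s = LinearMap.id) : Module.Injective R Q where
  out _ _ _ _ _ _ f hf g := by
    obtain ⟨e, he⟩ := Module.Injective.out f hf (s ∘ₗ g)
    exact ⟨p ∘ₗ e, fun x => by simpa [he] using LinearMap.congr_fun h (g x)⟩

lemma injective_quotient (L : Submodule R E) [Module.Injective R L] :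
    Module.Injective R (E ⧸ L) := by
  obtain ⟨r, hr⟩ := Module.Injective.out L.subtype L.subtype_injective LinearMap.id
  have hc : IsCompl L (LinearMap.ker r) := LinearMap.isCompl_of_proj hr
  exact injective_of_leftInverse (p := L.mkQ) (LinearMap.ext
    (Submodule.mk_quotientEquivOfIsCompl_apply hc) : L.mkQ ∘ₗ (Submodule.subtype _ ∘ₗ
      (L.quotientEquivOfIsCompl _ hc).toLinearMap) = LinearMap.id)

end Extension

lemma exists_injective_embedding (M : Type u) [AddCommGroup M] [Module R M] :
    ∃ (E : ModuleCat.{u} R) (f : M →ₗ[R] E), Module.Injective R E ∧ Function.Injective f :=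
  ⟨Injective.under (ModuleCat.of R M), (Injective.ι (ModuleCat.of R M)).hom,
    (Module.injective_iff_injective_object R _).2 (inferInstanceAs
      (CategoryTheory.Injective (Injective.under (ModuleCat.of R M)))),
    (ModuleCat.mono_iff_injective _).1 inferInstance⟩

variable [IsNoetherianRing R] (𝔞 : Ideal R)

/-- A map `g` from an ideal `I` to the torsion submodule kills `I ∩ 𝔞 ^ n` for some `n`, hence
extends to `R ⧸ 𝔞 ^ n → E`, and the image of the extension is again `𝔞`-power torsion. -/
instance injective_primaryComponent (E : Type u) [AddCommGroup E] [Module R E]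
    [Module.Injective R E] : Module.Injective R (𝔞.primaryComponent E) := by
  refine Module.Baer.injective fun I g => ?_
  let Γ := 𝔞.primaryComponent E
  obtain ⟨n, hn⟩ := (isPowTorsion_primaryComponent 𝔞 E).exists_forall_mem_pow_smul_top_eq_zero g
  obtain ⟨e, he⟩ := exists_comp_eq_of_ker_le ((𝔞 ^ n).mkQ ∘ₗ I.subtype) (φ := Γ.subtype ∘ₗ g)
    fun y hy => by
      have hy' : (y : R) ∈ 𝔞 ^ n := (Submodule.Quotient.mk_eq_zero _).1 hy
      simp [hn y (by simpa using hy')]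
  have htor : IsPowTorsion 𝔞 (R ⧸ 𝔞 ^ n) := fun q => ⟨n, mem_torsionBySet_ideal_iff.2 fun x hx =>
    Module.mem_annihilator.1 (by rwa [Ideal.annihilator_quotient]) q⟩
  refine ⟨e.codRestrict Γ (htor.apply_mem_primaryComponent e) ∘ₗ (𝔞 ^ n).mkQ, fun y hy => ?_⟩
  exact Subtype.ext (LinearMap.congr_fun he ⟨y, hy⟩)

variable {𝔞} {N : Type u} [AddCommGroup N] [Module R N]

lemma IsPowTorsion.exists_injective_embedding (h : IsPowTorsion 𝔞 N) :
    ∃ (E : ModuleCat.{u} R) (f : N →ₗ[R] E),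
      Module.Injective R E ∧ Function.Injective f ∧ IsPowTorsion 𝔞 E := by
  obtain ⟨E, f, _, hf⟩ := _root_.exists_injective_embedding (R := R) N
  exact ⟨.of R (𝔞.primaryComponent E), f.codRestrict _ (h.apply_mem_primaryComponent f),
    inferInstanceAs (Module.Injective R (𝔞.primaryComponent E)),
    (Set.injective_codRestrict _).2 hf, isPowTorsion_primaryComponent 𝔞 E⟩

lemma exists_injective_embedding_of_torsionBySet_eq_bot
    (h : torsionBySet R N (𝔞 : Set R) = ⊥) :
    ∃ (E : ModuleCat.{u} R) (f : N →ₗ[R] E),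
      Module.Injective R E ∧ Function.Injective f ∧ torsionBySet R E (𝔞 : Set R) = ⊥ := by
  obtain ⟨E, f, _, hf⟩ := exists_injective_embedding (R := R) N
  refine ⟨.of R (E ⧸ 𝔞.primaryComponent E), (𝔞.primaryComponent E).mkQ ∘ₗ f,
    injective_quotient _, ?_,
    torsionBySet_quotient_primaryComponent (IsNoetherian.noetherian 𝔞)⟩
  refine (injective_iff_map_eq_zero _).2 fun n hn => ?_
  have hfn : f n ∈ 𝔞.primaryComponent E := (Submodule.Quotient.mk_eq_zero _).1 hn
  obtain ⟨k, hk⟩ := (𝔞.primaryComponent_mem _ _).1 hfn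
  simpa [torsionBySet_pow_eq_bot h] using (apply_mem_torsionBySet_iff hf).1 hk

end Injective

/-! ### Long exact sequences of local cohomology -/

section ExtLimit

lemma exact_directLimit_map {ι : Type*} [Preorder ι] [IsDirectedOrder ι] [Nonempty ι]
    [DecidableEq ι] {F G H : ι → Type*} [∀ i, AddCommGroup (F i)] [∀ i, Module R (F i)]
    [∀ i, AddCommGroup (G i)] [∀ i, Module R (G i)] [∀ i, AddCommGroup (H i)]
    [∀ i, Module R (H i)] {f : ∀ i j, i ≤ j → F i →ₗ[R] F j} {g : ∀ i j, i ≤ j → G i →ₗ[R] G j}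
    {h : ∀ i j, i ≤ j → H i →ₗ[R] H j} [DirectedSystem H fun i j hij => h i j hij]
    {φ : ∀ i, F i →ₗ[R] G i} {ψ : ∀ i, G i →ₗ[R] H i}
    (hφ : ∀ i j hij, φ j ∘ₗ f i j hij = g i j hij ∘ₗ φ i)
    (hψ : ∀ i j hij, ψ j ∘ₗ g i j hij = h i j hij ∘ₗ ψ i)
    (hex : ∀ i, Function.Exact (φ i) (ψ i)) :
    Function.Exact (Module.DirectLimit.map φ hφ) (Module.DirectLimit.map ψ hψ) := by
  refine LinearMap.exact_of_comp_of_mem_range ?_ fun z hz => ?_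
  · rw [Module.DirectLimit.map_comp]
    refine Module.DirectLimit.hom_ext fun i => LinearMap.ext fun x => ?_
    simp [(hex i).apply_apply_eq_zero]
  · obtain ⟨i, x, rfl⟩ := Module.DirectLimit.exists_of z
    rw [Module.DirectLimit.map_apply_of] at hz
    obtain ⟨j, hij, hj⟩ := Module.DirectLimit.of.zero_exact hz
    obtain ⟨y, hy⟩ := (hex j (g i j hij x)).1 ((LinearMap.congr_fun (hψ i j hij) x).trans hj)
    exact ⟨Module.DirectLimit.of R ι F f j y, by
      rw [Module.DirectLimit.map_apply_of, hy, Module.DirectLimit.of_f]⟩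

variable (𝔞 : Ideal R)

lemma isPowTorsion_extLimit (M : ModuleCat.{u} R) (i : ℕ) : IsPowTorsion 𝔞 (ExtLimit 𝔞 M i) :=
  fun z => by
    obtain ⟨t, α, rfl⟩ := Module.DirectLimit.exists_of z
    exact ⟨t, mem_torsionBySet_ideal_iff.2 fun x hx => by
      rw [← map_smul, smul_ext_eq_zero hx, map_zero]⟩

lemma subsingleton_ext_of_injective (X : ModuleCat.{u} R) (E : Type u) [AddCommGroup E]
    [Module R E] [Module.Injective R E] (i : ℕ) :
    Subsingleton (Abelian.Ext X (ModuleCat.of R E) (i + 1)) :=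
  have := Module.injective_object_of_injective_module R E
  Abelian.Ext.subsingleton_of_injective X (ModuleCat.of R E) i

namespace ExtLimit

lemma subsingleton_of_forall {M : ModuleCat.{u} R} {i : ℕ}
    (h : ∀ t, Subsingleton (Abelian.Ext (quotPow 𝔞 t) M i)) : Subsingleton (ExtLimit 𝔞 M i) :=
  subsingleton_of_forall_eq 0 fun z => by
    obtain ⟨t, α, rfl⟩ := Module.DirectLimit.exists_of z
    rw [Subsingleton.elim α 0, map_zero]

lemma subsingleton_of_injective (E : Type u) [AddCommGroup E] [Module R E] [Module.Injective R E]
    (i : ℕ) : Subsingleton (ExtLimit 𝔞 (ModuleCat.of R E) (i + 1)) :=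
  subsingleton_of_forall 𝔞 fun _ => subsingleton_ext_of_injective _ E i

variable {A B C : Type u} [AddCommGroup A] [Module R A] [AddCommGroup B] [Module R B]
  [AddCommGroup C] [Module R C]

/-- The map induced by a linear map `f : A → B` on the direct limit of the `Ext^i(R ⧸ 𝔞 ^ t, -)`. -/
noncomputable def map (f : A →ₗ[R] B) (i : ℕ) :
    ExtLimit 𝔞 (ModuleCat.of R A) i →ₗ[R] ExtLimit 𝔞 (ModuleCat.of R B) i :=
  Module.DirectLimit.map (fun t => extMap (quotPow 𝔞 t) f i) fun _ _ h =>
    LinearMap.ext fun α => (extTransition_comp h α _ (add_zero i)).symm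

variable {f : A →ₗ[R] B} {g : B →ₗ[R] C} (hf : Function.Injective f) (hfg : Function.Exact f g)
  (hg : Function.Surjective g)

/-- The connecting map of a short exact sequence `0 → A → B → C → 0` on the direct limits of the
`Ext^i(R ⧸ 𝔞 ^ t, -)`. -/
noncomputable def connecting (i : ℕ) :
    ExtLimit 𝔞 (ModuleCat.of R C) i →ₗ[R] ExtLimit 𝔞 (ModuleCat.of R A) (i + 1) :=
  Module.DirectLimit.map (fun t => extConnecting (quotPow 𝔞 t) hf hfg hg i) fun _ _ h =>
    LinearMap.ext fun α => (extTransition_comp h α _ rfl).symm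

include hf hfg hg in
lemma exact_map_map (i : ℕ) : Function.Exact (map 𝔞 f i) (map 𝔞 g i) :=
  exact_directLimit_map _ _ fun t => exact_extMap_extMap (quotPow 𝔞 t) hf hfg hg i

lemma exact_map_connecting (i : ℕ) :
    Function.Exact (map 𝔞 g i) (connecting 𝔞 hf hfg hg i) :=
  exact_directLimit_map _ _ fun t => exact_extMap_extConnecting (quotPow 𝔞 t) hf hfg hg i

lemma exact_connecting_map (i : ℕ) :
    Function.Exact (connecting 𝔞 hf hfg hg i) (map 𝔞 f (i + 1)) :=
  exact_directLimit_map _ _ fun t => exact_extConnecting_extMap (quotPow 𝔞 t) hf hfg hg i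

end ExtLimit

end ExtLimit

section DegreeZero

section ExtZero

variable {𝔞 : Ideal R} {N N' : Type u} [AddCommGroup N] [Module R N] [AddCommGroup N'] [Module R N']

lemma extZeroEquivTorsionBySet_mk₀ (φ : ModuleCat.of R (R ⧸ 𝔞) ⟶ ModuleCat.of R N) :
    (extZeroEquivTorsionBySet 𝔞 N (Abelian.Ext.mk₀ φ) : N) = φ.hom (1 : R ⧸ 𝔞) := by
  have hφ : Abelian.Ext.linearEquiv₀ (R := R) (Abelian.Ext.mk₀ φ) = φ :=
    Abelian.Ext.addEquiv₀.apply_symm_apply φ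
  rw [extZeroEquivTorsionBySet, LinearEquiv.trans_apply, LinearEquiv.trans_apply, hφ]
  rfl

lemma extZeroEquivTorsionBySet_extMap (f : N →ₗ[R] N')
    (α : Abelian.Ext (ModuleCat.of R (R ⧸ 𝔞)) (ModuleCat.of R N) 0) :
    (extZeroEquivTorsionBySet 𝔞 N' (extMap _ f 0 α) : N') =
      f (extZeroEquivTorsionBySet 𝔞 N α) := by
  obtain ⟨φ, rfl⟩ := (Abelian.Ext.mk₀_bijective _ _).2 α
  have hφ : extMap _ f 0 (Abelian.Ext.mk₀ φ) = Abelian.Ext.mk₀ (φ ≫ ModuleCat.ofHom f) :=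
    Abelian.Ext.mk₀_comp_mk₀ _ _
  rw [hφ, extZeroEquivTorsionBySet_mk₀, extZeroEquivTorsionBySet_mk₀]
  rfl

lemma extZeroEquivTorsionBySet_extTransition {s t : ℕ} (h : s ≤ t)
    (α : Abelian.Ext (quotPow 𝔞 s) (ModuleCat.of R N) 0) :
    (extZeroEquivTorsionBySet (𝔞 ^ t) N (extTransition 𝔞 _ 0 s t h α) : N) =
      extZeroEquivTorsionBySet (𝔞 ^ s) N α := by
  obtain ⟨φ, rfl⟩ := (Abelian.Ext.mk₀_bijective _ _).2 α
  rw [extTransition_apply, Abelian.Ext.mk₀_comp_mk₀, extZeroEquivTorsionBySet_mk₀,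
    extZeroEquivTorsionBySet_mk₀]
  rfl

end ExtZero

namespace ExtLimit

variable (𝔞 : Ideal R) {N N' : Type u} [AddCommGroup N] [Module R N] [AddCommGroup N'] [Module R N']

variable (N) in
/-- The evaluation at `1` on the direct limit of the modules `Hom(R ⧸ 𝔞 ^ t, N)`. -/
noncomputable def eval : ExtLimit 𝔞 (ModuleCat.of R N) 0 →ₗ[R] N :=
  Module.DirectLimit.lift R ℕ _ _
    (fun t => Submodule.subtype _ ∘ₗ (extZeroEquivTorsionBySet (𝔞 ^ t) N).toLinearMap)
    fun _ _ h α => extZeroEquivTorsionBySet_extTransition h α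

lemma eval_of (t : ℕ) (α : Abelian.Ext (quotPow 𝔞 t) (ModuleCat.of R N) 0) :
    eval 𝔞 N (Module.DirectLimit.of R ℕ _ _ t α) = extZeroEquivTorsionBySet (𝔞 ^ t) N α :=
  Module.DirectLimit.lift_of ..

lemma eval_injective : Function.Injective (eval 𝔞 N) := by
  refine (injective_iff_map_eq_zero _).2 fun z hz => ?_
  obtain ⟨t, α, rfl⟩ := Module.DirectLimit.exists_of z
  rw [eval_of, Submodule.coe_eq_zero, LinearEquiv.map_eq_zero_iff] at hz
  rw [hz, map_zero]

lemma range_eval : LinearMap.range (eval 𝔞 N) = 𝔞.primaryComponent N := by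
  ext n
  rw [Ideal.primaryComponent_mem]
  constructor
  · rintro ⟨z, rfl⟩
    obtain ⟨t, α, rfl⟩ := Module.DirectLimit.exists_of z
    exact ⟨t, eval_of 𝔞 t α ▸ Subtype.prop _⟩
  · rintro ⟨t, ht⟩
    refine ⟨Module.DirectLimit.of R ℕ _ _ t ((extZeroEquivTorsionBySet _ N).symm ⟨n, ht⟩), ?_⟩
    rw [eval_of, LinearEquiv.apply_symm_apply]

variable (N) in
/-- In degree `0`, local cohomology is the `𝔞`-power torsion submodule. -/
noncomputable def zeroEquiv : ExtLimit 𝔞 (ModuleCat.of R N) 0 ≃ₗ[R] 𝔞.primaryComponent N :=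
  .ofInjective _ (eval_injective 𝔞) ≪≫ₗ .ofEq _ _ (range_eval 𝔞)

lemma eval_map (f : N →ₗ[R] N') (z : ExtLimit 𝔞 (ModuleCat.of R N) 0) :
    eval 𝔞 N' (map 𝔞 f 0 z) = f (eval 𝔞 N z) := by
  obtain ⟨t, α, rfl⟩ := Module.DirectLimit.exists_of z
  rw [eval_of, ← extZeroEquivTorsionBySet_extMap, ← eval_of]
  exact congrArg _ (Module.DirectLimit.map_apply_of ..)

variable {𝔞}

lemma map_zero_surjective (hN : IsPowTorsion 𝔞 N) {f : N →ₗ[R] N'} (hf : Function.Surjective f) :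
    Function.Surjective (map 𝔞 f 0) := fun z => by
  obtain ⟨n, hn⟩ := hf (eval 𝔞 N' z)
  obtain ⟨w, rfl⟩ : n ∈ LinearMap.range (eval 𝔞 N) :=
    range_eval 𝔞 (N := N) ▸ (𝔞.primaryComponent_mem N n).2 (hN n)
  exact ⟨w, eval_injective 𝔞 ((eval_map 𝔞 f w).trans hn)⟩

lemma subsingleton_zero_of_torsionBySet_eq_bot (h : torsionBySet R N (𝔞 : Set R) = ⊥) :
    Subsingleton (ExtLimit 𝔞 (ModuleCat.of R N) 0) := by
  have : Subsingleton (𝔞.primaryComponent N) :=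
    Submodule.subsingleton_iff_eq_bot.2 (primaryComponent_eq_bot h)
  exact (zeroEquiv 𝔞 N).injective.subsingleton

end ExtLimit

end DegreeZero

section DimensionShift

variable {𝔞 : Ideal R}

lemma IsPowTorsion.subsingleton_extLimit_succ [IsNoetherianRing R] {N : Type u} [AddCommGroup N]
    [Module R N] (hN : IsPowTorsion 𝔞 N) (i : ℕ) :
    Subsingleton (ExtLimit 𝔞 (ModuleCat.of R N) (i + 1)) := by
  induction i generalizing N with
  | zero =>
    obtain ⟨E, f, _, hf, hE⟩ := hN.exists_injective_embedding
    have hfg := LinearMap.exact_map_mkQ_range f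
    have hg := (LinearMap.range f).mkQ_surjective
    have := ExtLimit.subsingleton_of_injective 𝔞 E 0
    have hδ : ExtLimit.connecting 𝔞 hf hfg hg 0 = 0 :=
      (LinearMap.surjective_iff_eq_zero_of_exact (ExtLimit.exact_map_connecting 𝔞 hf hfg hg 0)).1
        (ExtLimit.map_zero_surjective hE hg)
    have hδ' : Function.Surjective (ExtLimit.connecting 𝔞 hf hfg hg 0) :=
      (LinearMap.surjective_iff_eq_zero_of_exact (ExtLimit.exact_connecting_map 𝔞 hf hfg hg 0)).2
        (Subsingleton.elim _ _)
    exact subsingleton_of_forall_eq 0 fun z => (hδ' z).elim fun w hw => hw ▸ congr($hδ w)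
  | succ i ih =>
    obtain ⟨E, f, _, hf, hE⟩ := hN.exists_injective_embedding
    have hfg := LinearMap.exact_map_mkQ_range f
    have hg := (LinearMap.range f).mkQ_surjective
    have := ExtLimit.subsingleton_of_injective 𝔞 E (i + 1)
    have := ih (hE.of_surjective hg)
    exact ((LinearMap.surjective_iff_eq_zero_of_exact
      (ExtLimit.exact_connecting_map 𝔞 hf hfg hg (i + 1))).2
        (Subsingleton.elim _ _)).subsingleton

namespace ExtLimit

variable {M : Type u} [AddCommGroup M] [Module R M]

lemma map_mkQ_primaryComponent_bijective [IsNoetherianRing R] (i : ℕ) :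
    Function.Bijective (map 𝔞 (𝔞.primaryComponent M).mkQ (i + 1)) := by
  have hΓ := (isPowTorsion_primaryComponent 𝔞 M).subsingleton_extLimit_succ
  have hf := (𝔞.primaryComponent M).subtype_injective
  have hfg := LinearMap.exact_subtype_mkQ (𝔞.primaryComponent M)
  have hg := (𝔞.primaryComponent M).mkQ_surjective
  have := hΓ i
  have := hΓ (i + 1)
  exact ⟨(LinearMap.injective_iff_eq_zero_of_exact (exact_map_map 𝔞 hf hfg hg (i + 1))).2
      (Subsingleton.elim _ _),
    (LinearMap.surjective_iff_eq_zero_of_exact (exact_map_connecting 𝔞 hf hfg hg (i + 1))).2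
      (Subsingleton.elim _ _)⟩

lemma subsingleton_of_injective_of_torsionBySet_eq_bot {E : Type u} [AddCommGroup E] [Module R E]
    [Module.Injective R E] (hE : torsionBySet R E (𝔞 : Set R) = ⊥) :
    ∀ i, Subsingleton (ExtLimit 𝔞 (ModuleCat.of R E) i)
  | 0 => subsingleton_zero_of_torsionBySet_eq_bot hE
  | i + 1 => subsingleton_of_injective 𝔞 E i

lemma connecting_bijective {A E C : Type u} [AddCommGroup A] [Module R A] [AddCommGroup E]
    [Module R E] [AddCommGroup C] [Module R C] [Module.Injective R E]
    (hE : torsionBySet R E (𝔞 : Set R) = ⊥) {f : A →ₗ[R] E} {g : E →ₗ[R] C}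
    (hf : Function.Injective f) (hfg : Function.Exact f g) (hg : Function.Surjective g) (i : ℕ) :
    Function.Bijective (connecting 𝔞 hf hfg hg i) := by
  have hE' := subsingleton_of_injective_of_torsionBySet_eq_bot hE
  have := hE' i
  have := hE' (i + 1)
  exact ⟨(LinearMap.injective_iff_eq_zero_of_exact (exact_map_connecting 𝔞 hf hfg hg i)).2
      (Subsingleton.elim _ _),
    (LinearMap.surjective_iff_eq_zero_of_exact (exact_connecting_map 𝔞 hf hfg hg i)).2
      (Subsingleton.elim _ _)⟩

/-- The dimension shift `H^i(E ⧸ (M ⧸ Γ M)) ≃ H^(i + 1)(M ⧸ Γ M) ≃ H^(i + 1)(M)` for an embedding of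
`M ⧸ Γ M` into a torsion-free injective module `E`. -/
noncomputable def quotientRangeEquivSucc [IsNoetherianRing R] {E : Type u} [AddCommGroup E]
    [Module R E] [Module.Injective R E] (hE : torsionBySet R E (𝔞 : Set R) = ⊥)
    {f : (M ⧸ 𝔞.primaryComponent M) →ₗ[R] E} (hf : Function.Injective f) (i : ℕ) :
    ExtLimit 𝔞 (ModuleCat.of R (E ⧸ LinearMap.range f)) i ≃ₗ[R]
      ExtLimit 𝔞 (ModuleCat.of R M) (i + 1) :=
  .ofBijective _ (connecting_bijective hE hf (LinearMap.exact_map_mkQ_range f)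
      (LinearMap.range f).mkQ_surjective i) ≪≫ₗ
    (LinearEquiv.ofBijective _ (map_mkQ_primaryComponent_bijective i)).symm

end ExtLimit

end DimensionShift

/-! ### Cofiniteness of local cohomology -/

section LocalCohomologyCofinite

variable {𝔞 : Ideal R}

section FiniteExt

variable {N : Type u} [AddCommGroup N] [Module R N]

lemma finiteExt_zero_of_torsionBySet_eq_bot (h : torsionBySet R N (𝔞 : Set R) = ⊥) :
    FiniteExt (ModuleCat.of R (R ⧸ 𝔞)) N 0 := by
  rw [finiteExt_zero_iff, h]
  infer_instance

lemma isExtCofinite_of_injective_of_torsionBySet_eq_bot [Module.Injective R N]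
    (h : torsionBySet R N (𝔞 : Set R) = ⊥) : IsExtCofinite 𝔞 N
  | 0 => finiteExt_zero_of_torsionBySet_eq_bot h
  | i + 1 =>
    have := subsingleton_ext_of_injective (ModuleCat.of R (R ⧸ 𝔞)) N i
    inferInstance

end FiniteExt

variable [IsNoetherianRing R] [Ring.KrullDimLE 1 (R ⧸ 𝔞)]

lemma isExtCofinite_primaryComponent {M : Type u} [AddCommGroup M] [Module R M]
    (h₀ : FiniteExt (ModuleCat.of R (R ⧸ 𝔞)) M 0) (h₁ : FiniteExt (ModuleCat.of R (R ⧸ 𝔞)) M 1) :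
    IsExtCofinite 𝔞 (𝔞.primaryComponent M) := by
  have hfg := LinearMap.exact_subtype_mkQ (𝔞.primaryComponent M)
  have hf := (𝔞.primaryComponent M).subtype_injective
  exact .of_isPowTorsion (isPowTorsion_primaryComponent 𝔞 M) (h₀.zero_of_injective hf)
    (.of_exact_left hf hfg (𝔞.primaryComponent M).mkQ_surjective
      (finiteExt_zero_of_torsionBySet_eq_bot
        (torsionBySet_quotient_primaryComponent (IsNoetherian.noetherian 𝔞))) h₁)

theorem isExtCofinite_extLimit {M : Type u} [AddCommGroup M] [Module R M] {n : ℕ}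
    (h : ∀ i ≤ n + 1, FiniteExt (ModuleCat.of R (R ⧸ 𝔞)) M i) :
    IsExtCofinite 𝔞 (ExtLimit 𝔞 (ModuleCat.of R M) n) := by
  have hΓ : IsExtCofinite 𝔞 (𝔞.primaryComponent M) :=
    isExtCofinite_primaryComponent (h 0 (by lia)) (h 1 (by lia))
  induction n generalizing M with
  | zero => exact hΓ.of_linearEquiv (ExtLimit.zeroEquiv 𝔞 M).symm
  | succ n ih =>
    obtain ⟨E, f, _, hf, hE⟩ := exists_injective_embedding_of_torsionBySet_eq_bot
      (torsionBySet_quotient_primaryComponent (N := M) (IsNoetherian.noetherian 𝔞))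
    have hQ (i) (hi : i ≤ n + 1) : FiniteExt (.of R (R ⧸ 𝔞)) (E ⧸ LinearMap.range f) i :=
      .of_exact_right hf (LinearMap.exact_map_mkQ_range f) (LinearMap.range f).mkQ_surjective
        (isExtCofinite_of_injective_of_torsionBySet_eq_bot hE i)
        ((h (i + 1) (by lia)).quotient (hΓ (i + 2)))
    exact (ih hQ (isExtCofinite_primaryComponent (hQ 0 (by lia)) (hQ 1 (by lia)))).of_linearEquiv
      (ExtLimit.quotientRangeEquivSucc hE hf n)

omit [IsNoetherianRing R] [Ring.KrullDimLE 1 (R ⧸ 𝔞)] in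
lemma IsPowTorsion.support_subset_zeroLocus {N : Type*} [AddCommGroup N] [Module R N]
    (h : IsPowTorsion 𝔞 N) : Module.support R N ⊆ PrimeSpectrum.zeroLocus (𝔞 : Set R) := by
  intro p hp x hx
  obtain ⟨n, hn⟩ := Module.mem_support_iff_exists_annihilator.1 hp
  obtain ⟨k, hk⟩ := h.exists_pow_smul_eq_zero hx n
  exact p.isPrime.mem_of_pow_mem k (hn ((Submodule.mem_annihilator_span_singleton n _).2 hk))

omit [IsNoetherianRing R] [Ring.KrullDimLE 1 (R ⧸ 𝔞)] in
lemma isCofinite_of_isPowTorsion {N : ModuleCat.{u} R} (hN : IsPowTorsion 𝔞 N)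
    (h : IsExtCofinite 𝔞 N) : IsCofinite R 𝔞 N :=
  ⟨hN.support_subset_zeroLocus, fun i =>
    (Module.Finite.equiv_iff (extModuleEquiv i (ModuleCat.of R (R ⧸ 𝔞)) N)).2 (h i)⟩

theorem isCofinite_localCohomology {M : ModuleCat.{u} R} {n : ℕ}
    (h : ∀ i ≤ n + 1, Module.Finite R (extModule R i (ModuleCat.of R (R ⧸ 𝔞)) M)) :
    IsCofinite R 𝔞 ((localCohomology 𝔞 n).obj M) :=
  have e := extLimitEquivLocalCohomology 𝔞 M n
  isCofinite_of_isPowTorsion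
    ((isPowTorsion_extLimit 𝔞 M n).of_injective e.symm.injective)
    ((isExtCofinite_extLimit fun i hi =>
      (Module.Finite.equiv_iff (extModuleEquiv i (ModuleCat.of R (R ⧸ 𝔞)) M)).1
        (h i hi)).of_linearEquiv e)

omit [Ring.KrullDimLE 1 (R ⧸ 𝔞)] in
lemma isCofinite_of_subsingleton {N : ModuleCat.{u} R} [Subsingleton N] : IsCofinite R 𝔞 N :=
  isCofinite_of_isPowTorsion (fun n => ⟨0, Subsingleton.elim 0 n ▸ zero_mem _⟩)
    (IsExtCofinite.of_finite 𝔞 N)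

end LocalCohomologyCofinite

end

theorem stmt7_general [IsNoetherianRing R] (𝔞 : Ideal R) (M : ModuleCat.{u} R)
    (hdim : ringKrullDim (R ⧸ 𝔞) ≤ 1)
    (h : ∀ i : ℕ, (i : ℕ∞) ≤ cohomologicalDim R 𝔞 M + 1 →
      Module.Finite R (extModule R i (ModuleCat.of R (R ⧸ 𝔞)) M)) (i : ℕ) :
    IsCofinite R 𝔞 ((localCohomology 𝔞 i).obj M) := by
  have := Ring.krullDimLE_iff.2 hdim
  rcases subsingleton_or_nontrivial ((localCohomology 𝔞 i).obj M) with _ | hi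
  · exact isCofinite_of_subsingleton
  · have hcd : (i : ℕ∞) ≤ cohomologicalDim R 𝔞 M := le_iSup₂ (f := fun (j : ℕ) _ => (j : ℕ∞)) i hi
    refine isCofinite_localCohomology fun j hj => h j ?_
    calc (j : ℕ∞) ≤ i + 1 := mod_cast hj
      _ ≤ cohomologicalDim R 𝔞 M + 1 := by gcongr

theorem stmt7 [IsNoetherianRing R] (𝔞 : Ideal R) (M : ModuleCat.{u} R)
    (hdim : ringKrullDim (R ⧸ 𝔞) = 1)
    (h : ∀ i : ℕ, (i : ℕ∞) ≤ cohomologicalDim R 𝔞 M + 1 →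
      Module.Finite R (extModule R i (ModuleCat.of R (R ⧸ 𝔞)) M)) :
    ∀ i : ℕ, IsCofinite R 𝔞 ((localCohomology 𝔞 i).obj M) :=
  stmt7_general R 𝔞 M hdim.le h
end

section
/- Let R be a Noetherian ring, M an R-module, and N, L finitely generated R-modules with Supp(L) ⊆ Supp(N). If Ext^i_R(N, M) is finitely generated for all i ≥ 0, then Ext^i_R(L, M) is finitely generated for all i ≥ 0. -/
open CategoryTheory

universe u

variable (R : Type u) [CommRing R]

/-!
Call a class `P` of modules extension-closed. Gruson's theorem, in the form of an induction
principle, says that if such a `P` contains every quotient of a finitely generated module `N` over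
a Noetherian ring, then it contains every finitely generated `L` with `Supp L ⊆ Supp N`: by prime
filtrations only `L = R ⧸ p` matters, and there a nonzero map `N → R ⧸ p` has image in `P` and
cokernel supported on primes strictly above `p`, so Noetherian induction on `p` applies.

For a Serre class `S`, the modules `X` with `Ext^n(X, M) ∈ S` form an extension-closed class. That
it contains every quotient `N ⧸ K` is seen by induction on `n`, from the exact sequence
`Ext^n(K, M) → Ext^{n+1}(N ⧸ K, M) → Ext^{n+1}(N, M)` and `Supp K ⊆ Supp N`.
-/

section Gruson

universe v

variable {R}

lemma prop_of_shortExact_linearMap (P : ObjectProperty (ModuleCat.{v} R))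
    [P.IsClosedUnderExtensions] {X₁ X₂ X₃ : Type v} [AddCommGroup X₁] [AddCommGroup X₂]
    [AddCommGroup X₃] [Module R X₁] [Module R X₂] [Module R X₃] {f : X₁ →ₗ[R] X₂}
    {g : X₂ →ₗ[R] X₃} (hf : Function.Injective f) (hg : Function.Surjective g)
    (hfg : Function.Exact f g) (h₁ : P (ModuleCat.of R X₁)) (h₃ : P (ModuleCat.of R X₃)) :
    P (ModuleCat.of R X₂) :=
  P.prop_X₂_of_shortExact (ModuleCat.shortComplex_shortExact
    (ShortComplex.moduleCatMk f g hfg.linearMap_comp_eq_zero) hfg hf hg) h₁ h₃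

lemma lt_of_mem_support_quotient {p q : PrimeSpectrum R} {X : Type v}
    [AddCommGroup X] [Module R X] (e : X ≃ₗ[R] R ⧸ p.asIdeal) {K : Submodule R X} (hK : K ≠ ⊥)
    (hq : q ∈ Module.support R (X ⧸ K)) : p < q := by
  have hann : Module.annihilator R (X ⧸ K) ≤ q.asIdeal := Module.annihilator_le_of_mem_support hq
  have hpq : p ≤ q := calc
    p.asIdeal = Module.annihilator R X := by rw [e.annihilator_eq, Ideal.annihilator_quotient]
    _ ≤ Module.annihilator R (X ⧸ K) :=
      LinearMap.annihilator_le_of_surjective K.mkQ K.mkQ_surjective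
    _ ≤ q.asIdeal := hann
  obtain ⟨x, hxK, hx⟩ := Submodule.exists_mem_ne_zero_of_ne_bot hK
  obtain ⟨a, ha⟩ := Ideal.Quotient.mk_surjective (e x)
  have hap : a ∉ p.asIdeal := by
    rwa [← Ideal.Quotient.eq_zero_iff_mem, ha, e.map_eq_zero_iff]
  have haK : a ∈ Module.annihilator R (X ⧸ K) := by
    refine Module.mem_annihilator.2 (K.mkQ_surjective.forall.2 fun y ↦ ?_)
    obtain ⟨b, hb⟩ := Ideal.Quotient.mk_surjective (e y)
    have hswap : a • y = b • x := e.injective <| by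
      rw [map_smul, map_smul, ← ha, ← hb]
      exact congrArg (Ideal.Quotient.mk p.asIdeal) (mul_comm a b)
    rw [← map_smul, hswap, Submodule.mkQ_apply, Submodule.Quotient.mk_eq_zero]
    exact K.smul_mem b hxK
  exact lt_of_le_not_ge hpq fun hqp ↦ hap (hqp (hann haK))

lemma isZero_le_of_forall_quotient {N : Type v} [AddCommGroup N] [Module R N]
    {P : ObjectProperty (ModuleCat.{v} R)}
    (hP : ∀ (Q : ModuleCat.{v} R) (f : N →ₗ[R] Q), Function.Surjective f → P Q) :
    Limits.IsZero ≤ P := fun Q hQ ↦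
  have := ModuleCat.subsingleton_of_isZero hQ
  hP Q 0 (Function.surjective_to_subsingleton _)

variable [IsNoetherianRing R]

lemma exists_linearMap_quotient_ne_zero {N : Type v} [AddCommGroup N] [Module R N]
    [Module.Finite R N] {p : PrimeSpectrum R} (hp : p ∈ Module.support R N) :
    ∃ f : N →ₗ[R] R ⧸ p.asIdeal, f ≠ 0 := by
  by_contra! h
  obtain ⟨r, hrN, hr⟩ := IsSMulRegular.subsingleton_linearMap_iff.1
    (subsingleton_of_forall_eq (0 : N →ₗ[R] R ⧸ p.asIdeal) h)
  have hrp : r • (1 : R ⧸ p.asIdeal) = 0 := by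
    have hrp' : r ∈ p.asIdeal := Module.annihilator_le_of_mem_support hp hrN
    rw [← Ideal.annihilator_quotient (I := p.asIdeal)] at hrp'
    exact Module.mem_annihilator.1 hrp' 1
  exact one_ne_zero (hr.right_eq_zero_of_smul hrp)

lemma prop_of_forall_prime_mem_support (P : ObjectProperty (ModuleCat.{v} R))
    [P.IsClosedUnderExtensions] (hzero : Limits.IsZero ≤ P) (L : Type v) [AddCommGroup L]
    [Module R L] [hL : Module.Finite R L]
    (hprime : ∀ p ∈ Module.support R L, ∀ X : ModuleCat.{v} R,
      Nonempty (X ≃ₗ[R] R ⧸ p.asIdeal) → P X) :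
    P (ModuleCat.of R L) := by
  induction hL using IsNoetherianRing.induction_on_isQuotientEquivQuotientPrime R with
  | subsingleton X => exact hzero _ (ModuleCat.isZero_of_subsingleton (ModuleCat.of R X))
  | quotient X p e =>
    refine hprime p ?_ (ModuleCat.of R X) ⟨e⟩
    rw [Module.mem_support_iff_of_finite, e.annihilator_eq, Ideal.annihilator_quotient]
  | exact X₁ X₂ X₃ f g hf hg hfg h₁ h₃ =>
    have hsupp := Module.support_of_exact hfg hf hg
    exact prop_of_shortExact_linearMap P hf hg hfg
      (h₁ fun p hp ↦ hprime p (hsupp ▸ .inl hp)) (h₃ fun p hp ↦ hprime p (hsupp ▸ .inr hp))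

variable {N : Type v} [AddCommGroup N] [Module R N] [Module.Finite R N]
  {P : ObjectProperty (ModuleCat.{v} R)} [P.IsClosedUnderExtensions]

lemma prop_of_mem_support_of_forall_quotient
    (hP : ∀ (Q : ModuleCat.{v} R) (f : N →ₗ[R] Q), Function.Surjective f → P Q)
    {p : PrimeSpectrum R} (hp : p ∈ Module.support R N) (X : ModuleCat.{v} R)
    (e : X ≃ₗ[R] R ⧸ p.asIdeal) : P X := by
  have : WellFoundedGT (PrimeSpectrum R) :=
    StrictMono.wellFoundedGT (f := PrimeSpectrum.asIdeal) fun _ _ h ↦ h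
  induction p using WellFoundedGT.induction generalizing X with
  | ind p ih =>
  obtain ⟨f, hf⟩ := exists_linearMap_quotient_ne_zero hp
  let g : N →ₗ[R] X := e.symm.toLinearMap ∘ₗ f
  have hg : LinearMap.range g ≠ ⊥ := fun h ↦ hf <| LinearMap.ext fun x ↦
    e.symm.map_eq_zero_iff.1 (LinearMap.congr_fun (LinearMap.range_eq_bot.1 h) x)
  have hfin : Module.Finite R X := Module.Finite.equiv e.symm
  have hcoker : P (ModuleCat.of R (X ⧸ LinearMap.range g)) := by
    refine prop_of_forall_prime_mem_support P (isZero_le_of_forall_quotient hP) _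
      fun q hq Y ⟨e'⟩ ↦ ?_
    have hpq : p < q := lt_of_mem_support_quotient e hg hq
    exact ih q hpq (Module.mem_support_mono hpq.le hp) Y e'
  exact prop_of_shortExact_linearMap P (Submodule.injective_subtype _)
    (Submodule.mkQ_surjective _) (LinearMap.exact_subtype_mkQ (LinearMap.range g))
    (hP (ModuleCat.of R _) g.rangeRestrict g.surjective_rangeRestrict) hcoker

theorem prop_of_support_subset_of_forall_quotient
    (hP : ∀ (Q : ModuleCat.{v} R) (f : N →ₗ[R] Q), Function.Surjective f → P Q)
    (L : ModuleCat.{v} R) [Module.Finite R L]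
    (hL : Module.support R L ⊆ Module.support R N) : P L :=
  prop_of_forall_prime_mem_support P (isZero_le_of_forall_quotient hP) L fun _ hp X ⟨e⟩ ↦
    prop_of_mem_support_of_forall_quotient hP (hL hp) X e

end Gruson

section SerreExt

open Abelian

universe w v' u'

variable {R} {C : Type u'} [Category.{v'} C] [Abelian C] [Linear R C]

section

variable [HasExt.{w} C]

lemma prop_of_exact_linearMap (P : ObjectProperty (ModuleCat.{w} R)) [P.IsSerreClass]
    {A B D : Type w} [AddCommGroup A] [AddCommGroup B] [AddCommGroup D] [Module R A] [Module R B]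
    [Module R D] {f : A →ₗ[R] B} {g : B →ₗ[R] D} (hfg : Function.Exact f g)
    (hA : P (ModuleCat.of R A)) (hD : P (ModuleCat.of R D)) : P (ModuleCat.of R B) :=
  P.prop_X₂_of_exact (S := ShortComplex.moduleCatMk f g hfg.linearMap_comp_eq_zero)
    (ModuleCat.shortComplex_exact _ hfg) hA hD

/-- The class of objects `X` such that `Ext^n(X, Y)` belongs to a class `P` of modules,
to which Gruson's theorem is applied in the variable `X`. -/
def extProperty (P : ObjectProperty (ModuleCat.{w} R)) (Y : C) (n : ℕ) : ObjectProperty C :=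
  fun X ↦ P (ModuleCat.of R (Abelian.Ext X Y n))

lemma extProperty_zero_X₃_of_shortExact (P : ObjectProperty (ModuleCat.{w} R))
    [P.IsClosedUnderSubobjects] {Y : C} {S : ShortComplex C} (hS : S.ShortExact)
    (h₂ : extProperty P Y 0 S.X₂) : extProperty P Y 0 S.X₃ := by
  have := hS.epi_g
  let φ := ModuleCat.ofHom ((Ext.mk₀ S.g).precompOfLinear R Y (zero_add 0))
  have : Mono φ := (ModuleCat.mono_iff_injective φ).2 (Ext.precomp_mk₀_injective_of_epi Y S.g)
  exact P.prop_of_mono φ h₂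

variable (P : ObjectProperty (ModuleCat.{w} R)) [P.IsSerreClass]

instance (Y : C) (n : ℕ) : (extProperty P Y n).IsClosedUnderExtensions where
  prop_X₂_of_shortExact {S} hS h₁ h₃ :=
    prop_of_exact_linearMap P (f := (Ext.mk₀ S.g).precompOfLinear R Y (zero_add n))
      (g := (Ext.mk₀ S.f).precompOfLinear R Y (zero_add n))
      ((ShortComplex.ab_exact_iff_function_exact _).1 (Ext.contravariant_sequence_exact₂' hS Y n))
      h₃ h₁

lemma extProperty_succ_X₃_of_shortExact {Y : C} {S : ShortComplex C} (hS : S.ShortExact) {n : ℕ}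
    (h₁ : extProperty P Y n S.X₁) (h₂ : extProperty P Y (n + 1) S.X₂) :
    extProperty P Y (n + 1) S.X₃ :=
  prop_of_exact_linearMap P (f := hS.extClass.precompOfLinear R Y (add_comm 1 n))
    (g := (Ext.mk₀ S.g).precompOfLinear R Y (zero_add (n + 1)))
    ((ShortComplex.ab_exact_iff_function_exact _).1
      (Ext.contravariant_sequence_exact₃' hS Y n (n + 1) (add_comm 1 n)))
    h₁ h₂

end

universe v

theorem extProperty_of_support_subset [IsNoetherianRing R] [HasExt.{w} (ModuleCat.{v} R)]
    (P : ObjectProperty (ModuleCat.{w} R)) [P.IsSerreClass] {M N : ModuleCat.{v} R}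
    [Module.Finite R N] {n : ℕ} (hN : ∀ i ≤ n, extProperty P M i N) (L : ModuleCat.{v} R)
    [Module.Finite R L] (hL : Module.support R L ⊆ Module.support R N) :
    extProperty P M n L := by
  induction n generalizing L with
  | zero =>
    refine prop_of_support_subset_of_forall_quotient (fun Q f hf ↦ ?_) L hL
    exact extProperty_zero_X₃_of_shortExact P (LinearMap.shortExact_shortComplexKer hf)
      (hN 0 le_rfl)
  | succ n ih =>
    refine prop_of_support_subset_of_forall_quotient (fun Q f hf ↦ ?_) L hL
    have hker : extProperty P M n (ModuleCat.of R (LinearMap.ker f)) :=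
      ih (fun i hi ↦ hN i (hi.trans n.le_succ)) _
        (Module.support_subset_of_injective _ (Submodule.injective_subtype _))
    exact extProperty_succ_X₃_of_shortExact P (LinearMap.shortExact_shortComplexKer hf) hker
      (hN (n + 1) le_rfl)

instance [IsNoetherianRing R] : (ModuleCat.isFG.{v} R).IsSerreClass where
  exists_zero := ⟨ModuleCat.of R PUnit.{v + 1}, ModuleCat.isZero_of_subsingleton _,
    inferInstanceAs (Module.Finite R PUnit.{v + 1})⟩
  prop_of_mono f _ (_ : Module.Finite R _) :=
    Module.Finite.of_injective f.hom ((ModuleCat.mono_iff_injective f).1 inferInstance)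
  prop_of_epi f _ (_ : Module.Finite R _) :=
    Module.Finite.of_surjective f.hom ((ModuleCat.epi_iff_surjective f).1 inferInstance)
  prop_X₂_of_shortExact {S} hS (_ : Module.Finite R _) (_ : Module.Finite R _) :=
    Module.Finite.of_exact
      ((ShortComplex.ShortExact.moduleCat_exact_iff_function_exact S).1 hS.exact)
      hS.moduleCat_surjective_g

end SerreExt

section ExtComparison

open Abelian

universe w v' u'

variable {R} {C : Type u'} [Category.{v'} C] [Abelian C] [Linear R C] [HasExt.{w} C] {X Y : C}
  (Q : ProjectiveResolution X)

lemma extMk_zero_eq_zero_iff_s8 {m : ℕ} (hm : 0 + 1 = m) (f : Q.complex.X 0 ⟶ Y)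
    (hf : Q.complex.d m 0 ≫ f = 0) : Q.extMk f m hm hf = 0 ↔ f = 0 := by
  have hzero : Limits.IsZero (Q.cochainComplex.X 1) :=
    Q.cochainComplex.isZero_of_isStrictlyLE 0 1 (by simp)
  rw [← Q.extEquivCohomologyClass.apply_eq_iff_eq, Q.extEquivCohomologyClass_extMk,
    Q.extEquivCohomologyClass_zero, CochainComplex.HomComplex.CohomologyClass.mk_eq_zero_iff,
    CochainComplex.HomComplex.Cocycle.toSingleMk_mem_coboundaries_iff _ _ _ _ _ 1 (by simp)]
  constructor
  · rintro ⟨g, hg⟩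
    rw [← cancel_epi (Q.cochainComplexXIso (-(0 : ℕ)) 0 rfl).hom, ← hg, hzero.eq_of_src g 0,
      Limits.comp_zero, Limits.comp_zero]
  · rintro rfl
    exact ⟨0, by simp⟩

lemma extMk_eq_zero_iff_exists_prev {n m : ℕ} (hm : n + 1 = m) (f : Q.complex.X n ⟶ Y)
    (hf : Q.complex.d m n ≫ f = 0) :
    Q.extMk f m hm hf = 0 ↔
      ∃ g : Q.complex.X ((ComplexShape.up ℕ).prev n) ⟶ Y, Q.complex.d n _ ≫ g = f := by
  cases n with
  | zero =>
    rw [extMk_zero_eq_zero_iff_s8]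
    simp [eq_comm]
  | succ p => exact Q.extMk_eq_zero_iff f m hm hf _ (by simp)

/-- The linear map sending a cocycle in `Hom(Q_n, Y)` to its class in `Ext^n(X, Y)`, for a
projective resolution `Q` of `X`. Cocycles are taken in the short complex defining the homology of
`Hom(Q, Y)`, so that the induced isomorphism is one out of this homology. -/
noncomputable def extOfCocycle (Y : C) (n : ℕ) :
    LinearMap.ker ((Q.complex.linearYonedaObj R Y).sc n).g.hom →ₗ[R] Abelian.Ext X Y n where
  toFun f := Q.extMk f.1 _ (by simp) f.2
  map_add' f g := (Q.add_extMk f.1 g.1 _ _ _ _).symm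
  map_smul' r f := by
    have hscale : f.1 ≫ (r • 𝟙 Y) = r • f.1 :=
      (Linear.comp_smul ..).trans (congrArg (r • ·) (Category.comp_id (X := Q.complex.X n) f.1))
    rw [RingHom.id_apply, Ext.smul_eq_comp_mk₀]
    refine Eq.trans ?_ (Q.extMk_comp_mk₀ f.1 _ (by simp) f.2 (r • 𝟙 Y)).symm
    congr 1
    exact hscale.symm

lemma extOfCocycle_surjective (n : ℕ) :
    Function.Surjective (extOfCocycle (R := R) Q Y n) := fun α ↦
  let ⟨f, hf, hα⟩ := Q.extMk_surjective α _ (by simp)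
  ⟨⟨f, hf⟩, hα⟩

lemma ker_extOfCocycle (n : ℕ) :
    LinearMap.ker (extOfCocycle (R := R) Q Y n) =
      LinearMap.range ((Q.complex.linearYonedaObj R Y).sc n).moduleCatToCycles := by
  ext f
  rw [LinearMap.mem_ker, LinearMap.mem_range]
  exact (extMk_eq_zero_iff_exists_prev Q (by simp) f.1 f.2).trans <|
    exists_congr fun _ ↦ ⟨fun h ↦ Subtype.ext h, congrArg Subtype.val⟩

variable (R X Y) in
/-- The comparison between the `Ext` obtained by deriving `Hom(-, Y)`, in which `extModule` is
defined, and the one given by morphisms in the derived category, which has the long exact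
sequences. -/
noncomputable def extLinearEquiv [EnoughProjectives C] (n : ℕ) :
    ((_root_.Ext R C n).obj (Opposite.op X)).obj Y ≃ₗ[R] Abelian.Ext X Y n :=
  let Q := ProjectiveResolution.of X
  let S := (Q.complex.linearYonedaObj R Y).sc n
  (Q.isoExt n Y ≪≫ S.moduleCatHomologyIso).toLinearEquiv ≪≫ₗ
    Submodule.quotEquivOfEq _ _ (ker_extOfCocycle Q n).symm ≪≫ₗ
    (extOfCocycle Q Y n).quotKerEquivOfSurjective (extOfCocycle_surjective Q n)

end ExtComparison

lemma extProperty_iff_extModule (P : ObjectProperty (ModuleCat.{u} R))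
    [P.IsClosedUnderIsomorphisms] (n : ℕ) (X Y : ModuleCat.{u} R) :
    extProperty P Y n X ↔ P (extModule R n X Y) :=
  P.prop_iff_of_iso (extLinearEquiv R X Y n).toModuleIso.symm

theorem stmt8_general [IsNoetherianRing R] (P : ObjectProperty (ModuleCat.{u} R))
    [P.IsSerreClass] (M N L : ModuleCat.{u} R) [Module.Finite R N] [Module.Finite R L]
    (hsupp : Module.support R L ⊆ Module.support R N) (n : ℕ)
    (h : ∀ i ≤ n, P (extModule R i N M)) : P (extModule R n L M) :=
  (extProperty_iff_extModule R P n L M).1 <| extProperty_of_support_subset P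
    (fun i hi ↦ (extProperty_iff_extModule R P i N M).2 (h i hi)) L hsupp

theorem stmt8 [IsNoetherianRing R] (M N L : ModuleCat.{u} R)
    [Module.Finite R N] [Module.Finite R L]
    (hsupp : Module.support R L ⊆ Module.support R N)
    (h : ∀ i : ℕ, Module.Finite R (extModule R i N M)) :
    ∀ i : ℕ, Module.Finite R (extModule R i L M) :=
  fun n ↦ stmt8_general R (ModuleCat.isFG R) M N L hsupp n fun i _ ↦ h i
end
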